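/- arXiv:math/0703203 — 5 statements merged into one kernel-verified Lean document; each statement's English description precedes it below -/
import Mathlib

section
/- Let R be a ring (not necessarily commutative), m ≥ 1, and let A = (a_{ij}) be a right-quantum m×m matrix over R. Let p = (p₁,…,p_m) and r = (r₁,…,r_m) be nonnegative integer vectors with p₁+⋯+p_m = r₁+⋯+r_m = n, and let π and σ be permutations of {1,…,m}. Then Σ_{α ∈ 𝒪^π(p;r)} α = Σ_{α ∈ 𝒫^σ(p;r)} α, where each sequence α is evaluated in R as the product of its steps. -/
/-!
Statement 0: the main theorem (part 1) of the paper: for a right-quantum matrix `A`,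
the sum over ordered sequences of type `(p;r)` with respect to `π` equals the sum over
path sequences of type `(p;r)` with respect to `σ`.
-/

variable {R : Type*} [Ring R] {m : ℕ}

/-- A sequence (list of steps `(i,j)`) has type `(p;r)` if `p h` counts steps with starting
height `h` and `r h` counts steps with ending height `h`. -/
def HasType (p r : Fin m → ℕ) (α : List (Fin m × Fin m)) : Prop :=
  (∀ h, (α.map Prod.fst).count h = p h) ∧ (∀ h, (α.map Prod.snd).count h = r h)

/-- An ordered sequence with respect to `π`: the `π`-preimages of the starting heights are
weakly increasing. -/
def IsOrderedSeq (π : Equiv.Perm (Fin m)) (α : List (Fin m × Fin m)) : Prop :=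
  α.Chain' fun s t => π.symm s.1 ≤ π.symm t.1

/-- A (nonempty) lattice path: each step starts at the ending point of the previous step. -/
def IsLatticePath (α : List (Fin m × Fin m)) : Prop :=
  α ≠ [] ∧ α.Chain' fun s t => s.2 = t.1

/-- A path sequence with respect to `σ`: a concatenation of lattice paths such that for each
constituent path, the `σ`-preimage of its starting height is minimal among the starting heights
of all steps from that point on, and its ending height does not occur as a starting height of
any later step. -/
def IsPathSeq (σ : Equiv.Perm (Fin m)) (α : List (Fin m × Fin m)) : Prop :=
  ∃ L : List (List (Fin m × Fin m)), α = L.flatten ∧ (∀ P ∈ L, IsLatticePath P) ∧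
    ∀ u : Fin L.length,
      (∀ f ∈ (L.get u).head?, ∀ t ∈ (L.drop (u : ℕ)).flatten, σ.symm f.1 ≤ σ.symm t.1) ∧
      (∀ g ∈ (L.get u).getLast?, ∀ t ∈ (L.drop ((u : ℕ) + 1)).flatten, t.1 ≠ g.2)

/-- Evaluation of a sequence in `R`: the product of its steps `a_{i₁j₁} a_{i₂j₂} ⋯ a_{iₙjₙ}`. -/
def evalSeq (A : Matrix (Fin m) (Fin m) R) (α : List (Fin m × Fin m)) : R :=
  (α.map fun s => A s.1 s.2).prod

/-- A matrix is right-quantum if `a_{jk} a_{ik} = a_{ik} a_{jk}` and, for `k ≠ l`,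
`a_{ik} a_{jl} − a_{jk} a_{il} = a_{jl} a_{ik} − a_{il} a_{jk}`. -/
def RightQuantum (A : Matrix (Fin m) (Fin m) R) : Prop :=
  (∀ i j k, A j k * A i k = A i k * A j k) ∧
  (∀ i j k l, k ≠ l → A i k * A j l - A j k * A i l = A j l * A i k - A i l * A j k)

/-!
Adjoin commuting variables `x₁, …, x_m` that commute with `R`. Right-quantumness says exactly that
the row forms `Yᵢ = ∑ⱼ aᵢⱼ xⱼ` commute with each other, so the product of the `Yᵢ`, each taken `pᵢ`
times, does not depend on the order of its factors. Moreover, when expanding the product from left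
to right, the next factor may be chosen depending on the summand picked from the previous one. So
for every rule that determines the next starting height from the preceding ending height and the
starting heights still to be used, the coefficient of `x^r` in this product is the sum of the
sequences of type `(p;r)` that obey the rule. Ordered sequences are those that always start as low
as possible; path sequences are those that continue the current path if possible and otherwise start
as low as possible, where heights are compared by their position in the given permutation.
-/

section StartRule

variable {ι κ γ : Type*}

/-- The starting heights of a sequence of steps, with multiplicity. -/
def startHeights (α : List (ι × κ)) : Multiset ι := (α.map Prod.fst : List ι)

/-- The ending heights of a sequence of steps, with multiplicity. -/
def endHeights (α : List (ι × κ)) : Multiset κ := (α.map Prod.snd : List κ)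

@[simp]
theorem endHeights_nil : endHeights ([] : List (ι × κ)) = 0 := rfl

@[simp]
theorem endHeights_cons (s : ι × κ) (α : List (ι × κ)) :
    endHeights (s :: α) = s.2 ::ₘ endHeights α := rfl

theorem forall_mem_startHeights {α : List (ι × κ)} {P : ι → Prop} :
    (∀ i ∈ startHeights α, P i) ↔ ∀ s ∈ α, P s.1 := by
  simp only [startHeights, Multiset.mem_coe, List.forall_mem_map]

theorem startHeights_eq_zero {α : List (ι × κ)} : startHeights α = 0 ↔ α = [] := by
  simp only [startHeights, Multiset.coe_eq_zero, List.map_eq_nil_iff]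

/-- A rule for the starting height of the next step of a sequence: `c h S i` means that the next
step may start at `i` when `h` is the preceding ending height (`none` before the first step) and
`S` is the multiset of starting heights still to be used. Only heights `i ∈ S` are relevant. -/
def StartRule (ι κ : Type*) := Option κ → Multiset ι → ι → Prop

namespace StartRule

/-- The rule always allows exactly one of the remaining starting heights. -/
def IsDeterministic (c : StartRule ι κ) : Prop :=
  ∀ h S, S ≠ 0 → ∃! i, i ∈ S ∧ c h S i

/-- Every step of the sequence starts as the rule allows, `h` being the ending height that precedes
the sequence. -/
def Follows (c : StartRule ι κ) : Option κ → List (ι × κ) → Prop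
  | _, [] => True
  | h, s :: α => c h (startHeights (s :: α)) s.1 ∧ c.Follows (some s.2) α

/-- The sequences with multiset of starting heights `S` that follow the rule `c` after the ending
height `h`. -/
def sequences (c : StartRule ι κ) (h : Option κ) (S : Multiset ι) : Set (List (ι × κ)) :=
  {α | startHeights α = S ∧ c.Follows h α}

theorem sequences_zero (c : StartRule ι κ) (h : Option κ) : c.sequences h 0 = {[]} := by
  ext α
  simp only [sequences, startHeights_eq_zero, Set.mem_ofPred_eq, Set.mem_singleton_iff,
    and_iff_left_iff_imp]
  rintro rfl
  trivial

theorem sequences_cons {c : StartRule ι κ} (hc : c.IsDeterministic) {h : Option κ} {i : ι}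
    {S : Multiset ι} (hi : c h (i ::ₘ S) i) :
    c.sequences h (i ::ₘ S) = ⋃ j, List.cons (i, j) '' c.sequences (some j) S := by
  ext α
  simp only [sequences, Set.mem_iUnion, Set.mem_image, Set.mem_ofPred_eq]
  constructor
  · rintro ⟨hS, hα⟩
    cases α with
    | nil => exact absurd hS Multiset.zero_ne_cons
    | cons s α =>
      obtain ⟨hs, hα⟩ := hα
      rw [hS] at hs
      have hsi : s.1 = i := (hc h (i ::ₘ S) Multiset.cons_ne_zero).unique
        ⟨hS ▸ Multiset.mem_cons_self s.1 (startHeights α), hs⟩ ⟨Multiset.mem_cons_self _ _, hi⟩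
      subst hsi
      exact ⟨s.2, α, ⟨(Multiset.cons_inj_right _).1 hS, hα⟩, rfl⟩
  · rintro ⟨j, α, ⟨rfl, hα⟩, rfl⟩
    exact ⟨rfl, hi, hα⟩

@[elab_as_elim]
theorem IsDeterministic.induction {c : StartRule ι κ} (hc : c.IsDeterministic)
    {motive : Option κ → Multiset ι → Prop} (zero : ∀ h, motive h 0)
    (cons : ∀ h i S, c h (i ::ₘ S) i → (∀ j, motive (some j) S) → motive h (i ::ₘ S))
    (h : Option κ) (S : Multiset ι) : motive h S := by
  induction hn : S.card generalizing h S with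
  | zero => exact Multiset.card_eq_zero.1 hn ▸ zero h
  | succ n ih =>
    have hS : S ≠ 0 := by rintro rfl; simp at hn
    obtain ⟨i, ⟨hiS, hi⟩, -⟩ := hc h S hS
    obtain ⟨T, rfl⟩ := Multiset.exists_cons_of_mem hiS
    exact cons h i T hi fun j => ih _ _ (by simpa using hn)

theorem finite_sequences [Finite κ] {c : StartRule ι κ} (hc : c.IsDeterministic) (h : Option κ)
    (S : Multiset ι) : (c.sequences h S).Finite := by
  induction h, S using hc.induction with
  | zero h => simp only [sequences_zero, Set.finite_singleton]
  | cons h i S hi ih =>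
    rw [sequences_cons hc hi]
    exact Set.finite_iUnion fun j => (ih j).image _

section Expansion

variable [Fintype κ] {B : Type*} [Semiring B] {c : StartRule ι κ}

theorem finsum_sequences_cons (hc : c.IsDeterministic) {h : Option κ} {i : ι} {S : Multiset ι}
    (hi : c h (i ::ₘ S) i) (f : ι × κ → B) :
    ∑ᶠ α ∈ c.sequences h (i ::ₘ S), (α.map f).prod =
      ∑ j, f (i, j) * ∑ᶠ α ∈ c.sequences (some j) S, (α.map f).prod := by
  have hdisj : Pairwise (Function.onFun Disjoint fun j =>
      List.cons (i, j) '' c.sequences (some j) S) := by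
    intro j k hjk
    refine Set.disjoint_left.2 ?_
    rintro _ ⟨α, -, rfl⟩ ⟨β, -, hβ⟩
    exact hjk (Prod.ext_iff.1 (List.cons_eq_cons.1 hβ).1).2.symm
  rw [sequences_cons hc hi,
    finsum_mem_iUnion hdisj fun j => (finite_sequences hc (some j) S).image _,
    finsum_eq_sum_of_fintype]
  refine Finset.sum_congr rfl fun j _ => ?_
  rw [finsum_mem_image List.cons_injective.injOn,
    mul_finsum_mem' _ _ (finite_sequences hc (some j) S)]
  simp only [List.map_cons, List.prod_cons]

theorem finsum_sequences (hc : c.IsDeterministic) (f : ι × κ → B) (h : Option κ) (S : Multiset ι)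
    (comm : {y | y ∈ S.map fun i => ∑ j, f (i, j)}.Pairwise Commute) :
    ∑ᶠ α ∈ c.sequences h S, (α.map f).prod =
      (S.map fun i => ∑ j, f (i, j)).noncommProd comm := by
  induction h, S using hc.induction with
  | zero h => simp [sequences_zero]
  | cons h i S hi ih =>
    have comm' : {y | y ∈ S.map fun i => ∑ j, f (i, j)}.Pairwise Commute :=
      comm.mono fun y hy => show y ∈ Multiset.map _ _ from
        Multiset.map_cons (fun i => ∑ j, f (i, j)) i S ▸ Multiset.mem_cons_of_mem hy
    simp only [finsum_sequences_cons hc hi, ih _ comm', ← Finset.sum_mul, Multiset.map_cons,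
      Multiset.noncommProd_cons]

end Expansion

/-- The rule of starting as low as possible, heights being compared by their `rank`. -/
def lowest [LE γ] (rank : ι → γ) : StartRule ι κ := fun _ S i => ∀ j ∈ S, rank i ≤ rank j

/-- The rule of continuing the current path if possible and otherwise starting as low as
possible, heights being compared by their `rank`. -/
def continueOrLowest [LE γ] (rank : ι → γ) : StartRule ι ι := fun h S i =>
  i ∈ h ∨ (∀ k ∈ h, k ∉ S) ∧ lowest rank h S i

theorem isDeterministic_lowest [LinearOrder γ] {rank : ι → γ} (hrank : rank.Injective) :
    (lowest rank : StartRule ι κ).IsDeterministic := by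
  intro _ S hS
  obtain ⟨i, hi, hmin⟩ := S.exists_min_image rank hS
  exact ⟨i, ⟨hi, hmin⟩, fun k ⟨hk, hkmin⟩ => hrank (le_antisymm (hkmin i hi) (hmin k hk))⟩

theorem isDeterministic_continueOrLowest [LinearOrder γ] {rank : ι → γ} (hrank : rank.Injective) :
    (continueOrLowest rank).IsDeterministic := by
  intro h S hS
  by_cases hstuck : ∀ k ∈ h, k ∉ S
  · refine (existsUnique_congr fun i => and_congr_right fun hi => ?_).1
      (isDeterministic_lowest hrank h S hS)
    exact ⟨fun hmin => .inr ⟨hstuck, hmin⟩,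
      fun hnext => hnext.elim (fun hih => absurd hi (hstuck i hih)) And.right⟩
  · push Not at hstuck
    obtain ⟨k, hk, hkS⟩ := hstuck
    exact ⟨k, ⟨hkS, .inl hk⟩, fun i ⟨_, hnext⟩ =>
      hnext.elim (fun hi => Option.mem_unique hi hk) fun hlow => absurd hkS (hlow.1 k hk)⟩

theorem follows_lowest_iff_pairwise [Preorder γ] (rank : ι → γ) (h : Option κ)
    (α : List (ι × κ)) :
    (lowest rank).Follows h α ↔ α.Pairwise fun s t => rank s.1 ≤ rank t.1 := by
  induction α generalizing h with
  | nil => simp [Follows]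
  | cons s α ih =>
    simp only [Follows, lowest, forall_mem_startHeights, List.forall_mem_cons, le_refl, true_and,
      ih, List.pairwise_cons]

end StartRule

end StartRule

open StartRule

theorem isOrderedSeq_iff_follows (π : Equiv.Perm (Fin m)) (h : Option (Fin m))
    (α : List (Fin m × Fin m)) : IsOrderedSeq π α ↔ (lowest π.symm).Follows h α := by
  have : IsTrans (Fin m × Fin m) fun s t => π.symm s.1 ≤ π.symm t.1 := ⟨fun _ _ _ => le_trans⟩
  rw [follows_lowest_iff_pairwise]
  exact List.isChain_iff_pairwise

section PathSeq

variable (σ : Equiv.Perm (Fin m))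

/-- The sequence `α` consists of the remaining steps of a path whose preceding step is `s`, followed
by a path sequence that never starts a step where that path ends. -/
def IsPathContinuation (s : Fin m × Fin m) (α : List (Fin m × Fin m)) : Prop :=
  ∃ P β, α = P ++ β ∧ IsLatticePath (s :: P) ∧
    (∀ g ∈ (s :: P).getLast?, ∀ t ∈ β, t.1 ≠ g.2) ∧ IsPathSeq σ β

theorem isPathSeq_nil : IsPathSeq σ [] := ⟨[], by simp⟩

theorem isPathSeq_cons (s : Fin m × Fin m) (α : List (Fin m × Fin m)) :
    IsPathSeq σ (s :: α) ↔
      (∀ t ∈ s :: α, σ.symm s.1 ≤ σ.symm t.1) ∧ IsPathContinuation σ s α := by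
  constructor
  · rintro ⟨L, hα, hpath, hL⟩
    match L with
    | [] => simp at hα
    | [] :: L => exact absurd rfl (hpath [] List.mem_cons_self).1
    | (s' :: P) :: L =>
      obtain ⟨rfl, rfl⟩ : s = s' ∧ α = P ++ L.flatten := by simpa using hα
      rw [List.forall_mem_cons] at hpath
      obtain ⟨hfirst, hlast⟩ := hL 0
      refine ⟨fun t ht => hfirst s rfl t ht, P, L.flatten, rfl, hpath.1, hlast,
        L, rfl, hpath.2, fun u => hL u.succ⟩
  · rintro ⟨hmin, P, _, rfl, hpath, hlast, L, rfl, hpaths, hL⟩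
    refine ⟨(s :: P) :: L, rfl, List.forall_mem_cons.2 ⟨hpath, hpaths⟩, Fin.cases ⟨?_, hlast⟩ hL⟩
    rintro f ⟨⟩
    exact hmin

theorem isPathContinuation_nil (s : Fin m × Fin m) : IsPathContinuation σ s [] :=
  ⟨[], [], rfl, ⟨List.cons_ne_nil _ _, List.isChain_singleton s⟩, by simp, isPathSeq_nil σ⟩

theorem isPathContinuation_cons (s t : Fin m × Fin m) (α : List (Fin m × Fin m)) :
    IsPathContinuation σ s (t :: α) ↔
      s.2 = t.1 ∧ IsPathContinuation σ t α ∨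
        (∀ u ∈ t :: α, u.1 ≠ s.2) ∧ IsPathSeq σ (t :: α) := by
  constructor
  · rintro ⟨P, β, hα, ⟨-, hchain⟩, hlast, hβ⟩
    match P with
    | [] =>
      obtain rfl : t :: α = β := hα
      exact .inr ⟨hlast s rfl, hβ⟩
    | t' :: P =>
      obtain ⟨rfl, rfl⟩ : t = t' ∧ α = P ++ β := by simpa using hα
      obtain ⟨hst, hchain⟩ := List.isChain_cons_cons.1 hchain
      exact .inl ⟨hst, P, β, rfl, ⟨List.cons_ne_nil _ _, hchain⟩, hlast, hβ⟩
  · rintro (⟨hst, P, β, rfl, ⟨-, hchain⟩, hlast, hβ⟩ | ⟨hstuck, hα⟩)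
    · exact ⟨t :: P, β, rfl,
        ⟨List.cons_ne_nil _ _, List.isChain_cons_cons.2 ⟨hst, hchain⟩⟩, hlast, hβ⟩
    · refine ⟨[], t :: α, rfl, ⟨List.cons_ne_nil _ _, List.isChain_singleton s⟩, ?_, hα⟩
      rintro g ⟨⟩
      exact hstuck

theorem isPathContinuation_iff_follows (s : Fin m × Fin m) (α : List (Fin m × Fin m)) :
    IsPathContinuation σ s α ↔ (continueOrLowest σ.symm).Follows (some s.2) α := by
  induction α generalizing s with
  | nil => simp only [isPathContinuation_nil, Follows]
  | cons t α ih =>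
    have hstuck : (∀ u ∈ t :: α, u.1 ≠ s.2) ↔ s.2 ∉ startHeights (t :: α) := by
      rw [← forall_mem_startHeights (P := (· ≠ s.2))]
      exact ⟨fun h hs => h _ hs rfl, fun h i hi his => h (his ▸ hi)⟩
    rw [isPathContinuation_cons, isPathSeq_cons, ih, hstuck, ← and_assoc, ← or_and_right]
    simp only [Follows, continueOrLowest, lowest, forall_mem_startHeights, Option.mem_some_iff,
      forall_eq']

theorem isPathSeq_iff_follows (α : List (Fin m × Fin m)) :
    IsPathSeq σ α ↔ (continueOrLowest σ.symm).Follows none α := by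
  cases α with
  | nil => simp only [isPathSeq_nil, Follows]
  | cons s α =>
    simp [isPathSeq_cons, isPathContinuation_iff_follows, Follows, continueOrLowest, lowest,
      forall_mem_startHeights]

end PathSeq

theorem sum_sum_eq_zero_of_antisymm {κ M : Type*} [AddCommMonoid M] (s : Finset κ)
    (f : κ → κ → M) (hdiag : ∀ k, f k k = 0) (hanti : ∀ k l, f k l + f l k = 0) :
    ∑ k ∈ s, ∑ l ∈ s, f k l = 0 := by
  rw [← Finset.sum_product']
  refine Finset.sum_involution (fun x _ => x.swap) (fun x _ => hanti _ _) ?_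
    (by simp +contextual) (by simp)
  rintro ⟨k, l⟩ - hne heq
  obtain rfl : l = k := congrArg Prod.fst heq
  exact hne (hdiag l)

/-- The multiset of heights in which `h` occurs `p h` times. -/
noncomputable def heightMultiset {ι : Type*} [Finite ι] (p : ι → ℕ) : Multiset ι :=
  Finsupp.toMultiset (Finsupp.equivFunOnFinite.symm p)

theorem hasType_iff (p r : Fin m → ℕ) (α : List (Fin m × Fin m)) :
    HasType p r α ↔ startHeights α = heightMultiset p ∧ endHeights α = heightMultiset r := by
  simp [HasType, Multiset.ext, startHeights, endHeights, heightMultiset,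
    Finsupp.count_toMultiset]

section RowForm

variable (A : Matrix (Fin m) (Fin m) R)

/-- The term `aᵢⱼ xⱼ` attached to the step `(i, j)`. The monomials in the commuting variables `x`
are the multisets of heights, so polynomials are elements of the additive monoid algebra. -/
noncomputable def stepMonomial (s : Fin m × Fin m) : AddMonoidAlgebra R (Multiset (Fin m)) :=
  .single {s.2} (A s.1 s.2)

/-- The linear form `∑ⱼ aᵢⱼ xⱼ` of the `i`-th row. -/
noncomputable def rowForm (i : Fin m) : AddMonoidAlgebra R (Multiset (Fin m)) :=
  ∑ j, stepMonomial A (i, j)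

theorem prod_stepMonomial (α : List (Fin m × Fin m)) :
    (α.map (stepMonomial A)).prod = .single (endHeights α) (evalSeq A α) := by
  induction α with
  | nil => simp [evalSeq, AddMonoidAlgebra.one_def]
  | cons s α ih =>
    simp [ih, stepMonomial, evalSeq, AddMonoidAlgebra.single_mul_single, Multiset.singleton_add]

variable {A}

theorem commute_rowForm (hA : RightQuantum A) (i j : Fin m) :
    Commute (rowForm A i) (rowForm A j) := by
  let minor (k l : Fin m) : R := A i k * A j l - A j k * A i l
  have minor_self (k : Fin m) : minor k k = 0 := by
    rw [sub_eq_zero, hA.1 i j k]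
  have minor_add_minor (k l : Fin m) : minor k l + minor l k = 0 := by
    obtain rfl | hkl := eq_or_ne k l
    · simp only [minor_self, add_zero]
    · simp only [minor, hA.2 i j k l hkl]
      abel
  have hcomm : rowForm A i * rowForm A j - rowForm A j * rowForm A i =
      ∑ k, ∑ l, .single ({k} + {l}) (minor k l) := by
    simp only [rowForm, stepMonomial, Finset.sum_mul_sum, AddMonoidAlgebra.single_mul_single,
      ← Finset.sum_sub_distrib, ← AddMonoidAlgebra.single_sub, minor]
  rw [commute_iff_eq, ← sub_eq_zero, hcomm]
  refine sum_sum_eq_zero_of_antisymm _ _ (fun k => ?_) fun k l => ?_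
  · rw [minor_self, AddMonoidAlgebra.single_zero]
  · rw [add_comm ({l} : Multiset (Fin m)) {k}, ← AddMonoidAlgebra.single_add, minor_add_minor,
      AddMonoidAlgebra.single_zero]

theorem pairwise_commute_rowForm (hA : RightQuantum A) (S : Multiset (Fin m)) :
    {y | y ∈ S.map (rowForm A)}.Pairwise Commute := by
  intro y hy z hz _
  obtain ⟨i, -, rfl⟩ := Multiset.mem_map.1 hy
  obtain ⟨j, -, rfl⟩ := Multiset.mem_map.1 hz
  exact commute_rowForm hA i j

theorem finsum_evalSeq_follows (hA : RightQuantum A) (p r : Fin m → ℕ)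
    {c : StartRule (Fin m) (Fin m)} (hc : c.IsDeterministic) (h : Option (Fin m)) :
    ∑ᶠ α ∈ {α | HasType p r α ∧ c.Follows h α}, evalSeq A α =
      (((heightMultiset p).map (rowForm A)).noncommProd (pairwise_commute_rowForm hA _)).coeff
        (heightMultiset r) := by
  classical
  let coeffAt : AddMonoidAlgebra R (Multiset (Fin m)) →+ R :=
    (Finsupp.applyAddHom (heightMultiset r)).comp AddMonoidAlgebra.coeffAddEquiv.toAddMonoidHom
  have hcoeff (α) : coeffAt (α.map (stepMonomial A)).prod =
      if endHeights α = heightMultiset r then evalSeq A α else 0 := by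
    rw [prod_stepMonomial]
    exact Finsupp.single_apply
  calc ∑ᶠ α ∈ {α | HasType p r α ∧ c.Follows h α}, evalSeq A α
      = ∑ᶠ α ∈ c.sequences h (heightMultiset p), coeffAt (α.map (stepMonomial A)).prod := by
        simp only [finsum_mem_def, hcoeff]
        congr 1 with α
        simp only [Set.indicator_apply, sequences, hasType_iff, Set.mem_ofPred_eq]
        split_ifs <;> tauto
    _ = coeffAt (∑ᶠ α ∈ c.sequences h (heightMultiset p), (α.map (stepMonomial A)).prod) :=
        (coeffAt.map_finsum_mem _ (finite_sequences hc h _)).symm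
    _ = _ := congrArg coeffAt (finsum_sequences hc (stepMonomial A) h _ _)

end RowForm

theorem sum_ordered_eq_sum_pathSeq (hm : 1 ≤ m)
    (A : Matrix (Fin m) (Fin m) R) (hA : RightQuantum A)
    (p r : Fin m → ℕ) (hpr : ∑ i, p i = ∑ i, r i)
    (π σ : Equiv.Perm (Fin m)) :
    ∑ᶠ α ∈ {α : List (Fin m × Fin m) | HasType p r α ∧ IsOrderedSeq π α}, evalSeq A α =
    ∑ᶠ α ∈ {α : List (Fin m × Fin m) | HasType p r α ∧ IsPathSeq σ α}, evalSeq A α := by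
  simp only [isOrderedSeq_iff_follows π none, isPathSeq_iff_follows]
  rw [finsum_evalSeq_follows hA p r (isDeterministic_lowest π.symm.injective),
    finsum_evalSeq_follows hA p r (isDeterministic_continueOrLowest σ.symm.injective)]
end

section
/- Let R be a ring (not necessarily commutative), m ≥ 1, and let A = (a_{ij}) be a right-quantum m×m matrix over R. Suppose the matrix I − A is invertible as a matrix over R, with (two-sided) inverse B. Then for all i, j ∈ {1,…,m}: det(I − A) · B_{ij} = (−1)^{i+j} · det((I − A)^{ji}), where det is the column determinant and (I − A)^{ji} denotes the matrix I − A with its j-th row and i-th column deleted. -/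
/-!
Statement 5: the right-quantum matrix inverse formula:
`det(I − A) · ((I−A)⁻¹)_{ij} = (−1)^{i+j} · det((I − A)^{ji})`, where `det` is the column
determinant and `(I−A)^{ji}` is `I − A` with the `j`-th row and `i`-th column deleted.
-/

variable {R : Type*} [Ring R] {m : ℕ}

/-- The column determinant of a matrix over a (not necessarily commutative) ring:
`∑_π sgn(π) b_{π(1)1} b_{π(2)2} ⋯ b_{π(m)m}`. -/
def cdet {n : ℕ} (B : Matrix (Fin n) (Fin n) R) : R :=
  ∑ π : Equiv.Perm (Fin n),
    (Equiv.Perm.sign π : ℤ) • ((List.finRange n).map fun k => B (π k) k).prod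

/-- The column determinant of the square submatrix of `B` with rows indexed by `S` and columns
indexed by `T` (each taken in increasing order); `0` if `S` and `T` have different sizes. -/
def cdetSub (B : Matrix (Fin m) (Fin m) R) (S T : Finset (Fin m)) : R :=
  if h : S.card = T.card then
    ∑ π : Equiv.Perm (Fin T.card),
      (Equiv.Perm.sign π : ℤ) •
        ((List.finRange T.card).map fun k =>
          B ((S.orderIsoOfFin h (π k) : Fin m)) ((T.orderIsoOfFin rfl k : Fin m))).prod
  else 0

/-!
For a right-quantum matrix, exchanging two adjacent columns negates the column determinant: in the
sum of the two determinants, the terms of `π` and `π * swap k (k + 1)` differ only in the factors at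
positions `k` and `k + 1`, and the right-quantum relations make these contributions equal, so the
opposite signs cancel them. If the two columns coincide, the same pairing cancels the terms of a
single determinant, so the column determinant is alternating in the columns even when `2` is a zero
divisor. In its expansion along the last column the entries of that column stand on the right, so
the columns of `C` other than the `i`-th, followed by the `k`-th, form a matrix whose column
determinant is `(cadjugate C * C) i k` up to sign. Thus `cadjugate C * C = cdet C • 1`, and it
remains to multiply by a right inverse of `C`.
-/

theorem sum_sign_smul_eq_zero_of_mul_swap {α M : Type*} [Fintype α] [DecidableEq α] [AddCommGroup M]
    {w : Equiv.Perm α → M} {a b : α} (hab : a ≠ b) (hw : ∀ π, w (π * Equiv.swap a b) = w π) :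
    ∑ π, (Equiv.Perm.sign π : ℤ) • w π = 0 := by
  refine Finset.sum_involution (fun π _ => π * Equiv.swap a b) ?_ ?_ ?_ ?_
  · intro π _
    simp [hw, Equiv.Perm.sign_swap hab]
  · intro π _ _ h
    exact hab (Equiv.swap_eq_one_iff.1 (mul_eq_left.1 h))
  · simp
  · simp [mul_assoc]

section FinRange

variable {n : ℕ}

theorem exists_finRange_succ_eq_append (k : Fin n) :
    ∃ l₁ l₂ : List (Fin (n + 1)), List.finRange (n + 1) = l₁ ++ k.castSucc :: k.succ :: l₂ := by
  refine ⟨(List.finRange (n + 1)).take k, (List.finRange (n + 1)).drop (k + 2), ?_⟩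
  conv_lhs => rw [← List.take_append_drop k (List.finRange (n + 1))]
  rw [List.drop_eq_getElem_cons (by simp), List.drop_eq_getElem_cons (by simp)]
  simp [Fin.ext_iff]

theorem exists_prod_map_finRange_eq {M : Type*} [Monoid M] (f : Fin (n + 1) → M) (k : Fin n) :
    ∃ P Q : M, ∀ g : Fin (n + 1) → M, (∀ x, x ≠ k.castSucc → x ≠ k.succ → g x = f x) →
      ((List.finRange (n + 1)).map g).prod = P * (g k.castSucc * g k.succ) * Q := by
  obtain ⟨l₁, l₂, h_split⟩ := exists_finRange_succ_eq_append k
  have h_nodup := h_split ▸ List.nodup_finRange (n + 1)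
  refine ⟨(l₁.map f).prod, (l₂.map f).prod, fun g hg => ?_⟩
  have h₁ : l₁.map g = l₁.map f := List.map_congr_left fun x hx => by grind
  have h₂ : l₂.map g = l₂.map f := List.map_congr_left fun x hx => by grind
  simp [h_split, h₁, h₂, mul_assoc]

end FinRange

/-- The permutation of `Fin (n + 1)` whose one-line notation is that of `π`, with the values
relabelled so as to avoid `j`, followed by `j`. It indexes the expansion of a column determinant
along its last column. -/
def permSnoc {n : ℕ} (π : Equiv.Perm (Fin n)) (j : Fin (n + 1)) : Equiv.Perm (Fin (n + 1)) :=
  Fin.cycleIcc j (Fin.last n) * finSuccEquivLast.symm.permCongr (Equiv.optionCongr π)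

section PermSnoc

variable {n : ℕ}

theorem permSnoc_last (π : Equiv.Perm (Fin n)) (j : Fin (n + 1)) :
    permSnoc π j (Fin.last n) = j := by
  simp only [permSnoc, Equiv.Perm.mul_apply, Equiv.permCongr_apply, Equiv.symm_symm,
    finSuccEquivLast_last, Equiv.optionCongr_apply, Option.map_none, finSuccEquivLast_symm_none,
    Fin.cycleIcc_of_last (Fin.le_last j)]

theorem permSnoc_castSucc (π : Equiv.Perm (Fin n)) (j : Fin (n + 1)) (x : Fin n) :
    permSnoc π j x.castSucc = j.succAbove (π x) := by
  simp only [permSnoc, Equiv.Perm.mul_apply, Equiv.permCongr_apply, Equiv.symm_symm,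
    finSuccEquivLast_castSucc, Equiv.optionCongr_apply, Option.map_some, finSuccEquivLast_symm_some]
  rw [← Fin.succAbove_last_apply]
  exact congrFun (Fin.cycleIcc_comp_succAbove j _ (Fin.le_last j)) (π x)

theorem coe_permSnoc (π : Equiv.Perm (Fin n)) (j : Fin (n + 1)) :
    ⇑(permSnoc π j) = Fin.snoc (α := fun _ => Fin (n + 1)) (j.succAbove ∘ π) j := by
  ext x
  cases x using Fin.lastCases <;> simp [permSnoc_last, permSnoc_castSucc]

theorem sign_permSnoc (π : Equiv.Perm (Fin n)) (j : Fin (n + 1)) :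
    Equiv.Perm.sign (permSnoc π j) = (-1) ^ (n + (j : ℕ)) * Equiv.Perm.sign π := by
  have h_parity : n + (j : ℕ) = (n - j) + 2 * j := by omega
  rw [permSnoc, map_mul, Equiv.Perm.sign_permCongr, Equiv.optionCongr_sign,
    Fin.sign_cycleIcc_of_le (Fin.le_last j), Fin.val_last, h_parity, pow_add, pow_mul]
  simp

theorem permSnoc_bijective :
    Function.Bijective fun p : Fin (n + 1) × Equiv.Perm (Fin n) => permSnoc p.2 p.1 := by
  rw [Fintype.bijective_iff_injective_and_card]
  constructor
  · rintro ⟨i, π⟩ ⟨j, ρ⟩ h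
    obtain rfl : i = j := by simpa [permSnoc_last] using DFunLike.congr_fun h (Fin.last n)
    have h_eq (x : Fin n) : π x = ρ x := by
      simpa [permSnoc_castSucc] using DFunLike.congr_fun h x.castSucc
    rw [Equiv.ext h_eq]
  · simp [Fintype.card_perm, Nat.factorial_succ]

end PermSnoc

section ColumnDeterminant

variable {n : ℕ}

theorem cdet_succ_column_last (C : Matrix (Fin (n + 1)) (Fin (n + 1)) R) :
    cdet C = ∑ j : Fin (n + 1), (-1 : R) ^ (n + (j : ℕ)) *
      (cdet (C.submatrix j.succAbove Fin.castSucc) * C j (Fin.last n)) := by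
  rw [cdet, ← permSnoc_bijective.sum_comp, Fintype.sum_prod_type]
  refine Finset.sum_congr rfl fun j _ => ?_
  rw [cdet, Finset.sum_mul, Finset.mul_sum]
  refine Finset.sum_congr rfl fun π _ => ?_
  simp [List.finRange_succ_last, Function.comp_def, permSnoc_last, permSnoc_castSucc,
    sign_permSnoc, zsmul_eq_mul, mul_assoc]

theorem cdet_eq_zero_of_adjacent_column_eq {C : Matrix (Fin (n + 1)) (Fin (n + 1)) R} {k : Fin n}
    (h_comm : ∀ i j, Commute (C i k.succ) (C j k.succ))
    (h_eq : ∀ i, C i k.castSucc = C i k.succ) : cdet C = 0 := by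
  refine sum_sign_smul_eq_zero_of_mul_swap k.castSucc_lt_succ.ne fun π => ?_
  obtain ⟨P, Q, h_prod⟩ := exists_prod_map_finRange_eq (fun x => C (π x) x) k
  rw [h_prod _ ?_, h_prod _ ?_]
  · simp [h_eq, (h_comm (π k.succ) (π k.castSucc)).eq]
  all_goals
    intro x hx hx'
    simp [Equiv.swap_apply_of_ne_of_ne hx hx']

theorem cdetSub_eq_cdet_submatrix {k : ℕ} (C : Matrix (Fin m) (Fin m) R) {S T : Finset (Fin m)}
    (hS : S.card = k) (hT : T.card = k) :
    cdetSub C S T = cdet (C.submatrix (S.orderEmbOfFin hS) (T.orderEmbOfFin hT)) := by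
  subst hT
  rw [cdetSub, dif_pos hS]
  rfl

theorem cdetSub_erase (C : Matrix (Fin (n + 1)) (Fin (n + 1)) R) (i j : Fin (n + 1)) :
    cdetSub C (Finset.univ.erase j) (Finset.univ.erase i) =
      cdet (C.submatrix j.succAbove i.succAbove) := by
  have h_card (x : Fin (n + 1)) : ({x}ᶜ : Finset (Fin (n + 1))).card = n := by
    simp [Finset.card_compl]
  rw [← Finset.compl_singleton, ← Finset.compl_singleton,
    cdetSub_eq_cdet_submatrix C (h_card j) (h_card i),
    Finset.orderEmbOfFin_compl_singleton_eq_succAboveOrderEmb,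
    Finset.orderEmbOfFin_compl_singleton_eq_succAboveOrderEmb]
  rfl

end ColumnDeterminant

namespace RightQuantum

variable {n : ℕ}

theorem mul_add_mul_comm {C : Matrix (Fin m) (Fin m) R} (hC : RightQuantum C)
    (i j k l : Fin m) :
    C i k * C j l + C i l * C j k = C j k * C i l + C j l * C i k := by
  rcases eq_or_ne k l with rfl | hkl
  · rw [hC.1 i j k]
  · have h := sub_eq_sub_iff_add_eq_add.1 (hC.2 i j k l hkl)
    rw [h, add_comm]

theorem submatrix {C : Matrix (Fin m) (Fin m) R} (hC : RightQuantum C) (r c : Fin n → Fin m) :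
    RightQuantum (C.submatrix r c) := by
  refine ⟨fun i j k => hC.1 _ _ _, fun i j k l _ => ?_⟩
  rw [sub_eq_sub_iff_add_eq_add, Matrix.submatrix_apply]
  exact (hC.mul_add_mul_comm _ _ _ _).trans (add_comm _ _)

theorem sub_of_commute {A B : Matrix (Fin m) (Fin m) R} (hA : RightQuantum A)
    (hB : RightQuantum B) (hAB : ∀ i j k l, Commute (A i j) (B k l)) : RightQuantum (A - B) := by
  constructor
  · intro i j k
    simp only [Matrix.sub_apply, sub_mul, mul_sub, hA.1 i j k, hB.1 i j k, (hAB _ _ _ _).eq]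
    abel
  · intro i j k l hkl
    simp only [Matrix.sub_apply, sub_mul, mul_sub, (hAB _ _ _ _).eq]
    linear_combination (norm := abel) hA.2 i j k l hkl + hB.2 i j k l hkl

theorem one_sub {A : Matrix (Fin m) (Fin m) R} (hA : RightQuantum A) : RightQuantum (1 - A) := by
  have h_central (i j : Fin m) (x : R) : Commute ((1 : Matrix (Fin m) (Fin m) R) i j) x := by
    by_cases h : i = j <;> simp [Matrix.one_apply, h]
  have h_one : RightQuantum (1 : Matrix (Fin m) (Fin m) R) := by
    refine ⟨fun i j k => h_central _ _ _, fun i j k l _ => ?_⟩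
    rw [(h_central i k _).eq, (h_central j k _).eq]
  exact h_one.sub_of_commute hA fun i j k l => h_central i j (A k l)

theorem cdet_submatrix_swap_castSucc_succ {C : Matrix (Fin (n + 1)) (Fin (n + 1)) R}
    (hC : RightQuantum C) (k : Fin n) :
    cdet (C.submatrix id (Equiv.swap k.castSucc k.succ)) = -cdet C := by
  rw [eq_neg_iff_add_eq_zero, cdet, cdet, ← Finset.sum_add_distrib]
  simp_rw [← smul_add]
  refine sum_sign_smul_eq_zero_of_mul_swap k.castSucc_lt_succ.ne fun π => ?_
  obtain ⟨P, Q, h_prod⟩ := exists_prod_map_finRange_eq (fun x => C (π x) x) k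
  rw [h_prod _ ?_, h_prod _ ?_, h_prod _ ?_, h_prod _ ?_, ← add_mul, ← add_mul, ← mul_add,
    ← mul_add]
  · have h_cross := hC.mul_add_mul_comm (π k.succ) (π k.castSucc) k.succ k.castSucc
    simpa using congrArg (P * · * Q) h_cross
  all_goals
    intro x hx hx'
    simp [Equiv.swap_apply_of_ne_of_ne hx hx']

theorem cdet_submatrix_perm {C : Matrix (Fin n) (Fin n) R} (hC : RightQuantum C)
    (σ : Equiv.Perm (Fin n)) :
    cdet (C.submatrix id σ) = (Equiv.Perm.sign σ : ℤ) • cdet C := by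
  obtain _ | n := n
  · simp [Subsingleton.elim σ 1]
  have h_closure :
      σ ∈ Submonoid.closure (Set.range fun i : Fin n => Equiv.swap i.castSucc i.succ) :=
    Equiv.Perm.mclosure_swap_castSucc_succ n ▸ Submonoid.mem_top σ
  induction h_closure using Submonoid.closure_induction_right with
  | one => simp
  | mul_right σ _ s hs ih =>
    obtain ⟨k, rfl⟩ := hs
    have h_swap := (hC.submatrix id σ).cdet_submatrix_swap_castSucc_succ k
    rw [Matrix.submatrix_submatrix, ih] at h_swap
    rw [Equiv.Perm.coe_mul]
    simpa [Equiv.Perm.sign_swap k.castSucc_lt_succ.ne] using h_swap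

theorem cdet_eq_zero_of_column_eq {C : Matrix (Fin n) (Fin n) R} (hC : RightQuantum C)
    {a b : Fin n} (hab : a ≠ b) (h_eq : ∀ i, C i a = C i b) : cdet C = 0 := by
  wlog h_lt : a < b generalizing a b
  · exact this hab.symm (fun i => (h_eq i).symm) (hab.symm.lt_of_le (not_lt.1 h_lt))
  obtain _ | n := n
  · exact a.elim0
  obtain ⟨k, rfl⟩ := Fin.exists_castSucc_eq.2 (Fin.ne_last_of_lt h_lt)
  have h_move : cdet (C.submatrix id (Equiv.swap k.succ b)) = 0 := by
    refine cdet_eq_zero_of_adjacent_column_eq (k := k) (fun i j => hC.1 _ _ _) fun i => ?_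
    simp [Equiv.swap_apply_of_ne_of_ne k.castSucc_lt_succ.ne hab, h_eq]
  rw [hC.cdet_submatrix_perm] at h_move
  simpa using (smul_eq_zero_iff_eq (Equiv.Perm.sign (Equiv.swap k.succ b))).1 h_move

end RightQuantum

section Cramer

variable {n : ℕ}

/-- The adjugate with respect to the column determinant: the `(i, j)` entry is the signed minor
omitting row `j` and column `i`. The size is `n + 1` so that `Fin.succAbove` can do the omitting. -/
def cadjugate (C : Matrix (Fin (n + 1)) (Fin (n + 1)) R) : Matrix (Fin (n + 1)) (Fin (n + 1)) R :=
  Matrix.of fun i j => (-1) ^ ((i : ℕ) + j) * cdet (C.submatrix j.succAbove i.succAbove)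

theorem cadjugate_mul_apply (C : Matrix (Fin (n + 1)) (Fin (n + 1)) R) (i k : Fin (n + 1)) :
    (cadjugate C * C) i k =
      (-1) ^ (n + (i : ℕ)) *
        cdet (C.submatrix id (Fin.snoc (α := fun _ => Fin (n + 1)) i.succAbove k)) := by
  rw [cdet_succ_column_last, Matrix.mul_apply, Finset.mul_sum]
  refine Finset.sum_congr rfl fun j _ => ?_
  have h_sign : (-1 : R) ^ (n + (i : ℕ)) * (-1) ^ (n + (j : ℕ)) = (-1) ^ ((i : ℕ) + j) := by
    rw [← pow_add, show n + (i : ℕ) + (n + j) = 2 * n + (i + j) by ring, pow_add, pow_mul]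
    simp
  rw [← mul_assoc ((-1) ^ (n + (i : ℕ))), h_sign]
  simp [cadjugate, Function.comp_def, Matrix.submatrix_submatrix, mul_assoc]

theorem RightQuantum.cadjugate_mul {C : Matrix (Fin (n + 1)) (Fin (n + 1)) R}
    (hC : RightQuantum C) : cadjugate C * C = cdet C • 1 := by
  ext i k
  rw [cadjugate_mul_apply, Matrix.smul_apply]
  rcases eq_or_ne i k with rfl | hik
  · have h_perm := hC.cdet_submatrix_perm (permSnoc 1 i)
    rw [coe_permSnoc, sign_permSnoc, Equiv.Perm.coe_one, Function.comp_id] at h_perm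
    rw [h_perm]
    simp [← mul_assoc, ← pow_add, ← two_mul]
  · obtain ⟨a, ha⟩ := Fin.exists_succAbove_eq hik.symm
    have h_zero := (hC.submatrix id (Fin.snoc (α := fun _ => Fin (n + 1)) i.succAbove k)
      ).cdet_eq_zero_of_column_eq (Fin.castSucc_lt_last a).ne (by simp [ha])
    simp [h_zero, hik]

end Cramer

theorem rightQuantum_matrix_inverse_general {C B : Matrix (Fin m) (Fin m) R}
    (hC : RightQuantum C) (hB : C * B = 1) (i j : Fin m) :
    cdet C * B i j =
      (-1 : R) ^ (((i : ℕ) + 1) + ((j : ℕ) + 1)) *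
        cdetSub C (Finset.univ.erase j) (Finset.univ.erase i) := by
  obtain _ | n := m
  · exact i.elim0
  have h_adjugate : cdet C • B = cadjugate C :=
    calc cdet C • B = cdet C • 1 * B := by rw [Matrix.smul_mul, one_mul]
      _ = cadjugate C * (C * B) := by rw [← hC.cadjugate_mul, mul_assoc]
      _ = cadjugate C := by rw [hB, mul_one]
  have h_sign : (-1 : R) ^ (((i : ℕ) + 1) + ((j : ℕ) + 1)) = (-1) ^ ((i : ℕ) + j) := by
    rw [add_add_add_comm, pow_add, neg_one_pow_two, mul_one]
  rw [h_sign, cdetSub_erase]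
  exact congrFun₂ h_adjugate i j

theorem rightQuantum_matrix_inverse (hm : 1 ≤ m)
    (A : Matrix (Fin m) (Fin m) R) (hA : RightQuantum A)
    (B : Matrix (Fin m) (Fin m) R) (hB₁ : (1 - A) * B = 1) (hB₂ : B * (1 - A) = 1)
    (i j : Fin m) :
    cdet (1 - A) * B i j =
      (-1 : R) ^ (((i : ℕ) + 1) + ((j : ℕ) + 1)) *
        cdetSub (1 - A) (Finset.univ.erase j) (Finset.univ.erase i) :=
  rightQuantum_matrix_inverse_general hA.one_sub hB₁ i j
end

section
/- Let R be a ring (not necessarily commutative), m ≥ 1, and let A = (a_{ij}) be a right-quantum m×m matrix over R. Suppose I − A is invertible over R, with inverse C. Let I, J ⊆ {1,…,m} with |I| = |J|. Then det(I − A) · det(C_{I,J}) = (−1)^{Σ_{i∈I} i + Σ_{j∈J} j} · det((I − A)^{J,I}), where det is the column determinant, C_{I,J} is the submatrix of C with rows indexed by I and columns indexed by J (each in increasing order), and (I − A)^{J,I} is the matrix I − A with the rows indexed by J and the columns indexed by I deleted. -/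
/-!
Statement 9: the right-quantum Jacobi ratio theorem:
`det(I − A) · det(C_{I,J}) = (−1)^{Σ_{i∈I} i + Σ_{j∈J} j} · det((I − A)^{J,I})`, where
`C = (I − A)⁻¹`, `det` is the column determinant, `C_{I,J}` is the submatrix of `C` with rows
`I` and columns `J` (in increasing order), and `(I − A)^{J,I}` is `I − A` with rows `J` and
columns `I` deleted.
-/

variable {R : Type*} [Ring R] {m : ℕ}

/-!
Let `ψ₁, …, ψₘ` be Grassmann variables commuting with `R` and let `M = 1 - A`, which is again
right-quantum. Right-quantumness says exactly that the `yₖ = ∑ᵢ ψᵢ Mᵢₖ` are again Grassmann, and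
`ψ = y C`. Ordered products of the `yₖ` expand in those of the `ψᵢ` with the column minors of `M` as
coefficients, and conversely with those of `C`. Expanding `y_{Iᶜ} ψ_J` once in `ψ` and once in `y`
gives `± ψ₁ ⋯ ψₘ det M_{Jᶜ,Iᶜ} = ± y₁ ⋯ yₘ det C_{I,J} = ± ψ₁ ⋯ ψₘ det M det C_{I,J}`.
-/

open ExteriorAlgebra (ι ιMulti)
open scoped Matrix TensorProduct

section OrderedProd

variable {α S : Type*} [LinearOrder α]

/-- The product of the members of the family `z` indexed by the finite set `s`, taken in increasing
order of the indices. -/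
def orderedProd [Monoid S] (z : α → S) (s : Finset α) : S :=
  (s.sort.map z).prod

@[simp]
theorem orderedProd_empty [Monoid S] (z : α → S) : orderedProd z ∅ = 1 := by
  simp [orderedProd]

theorem orderedProd_insert_of_lt [Monoid S] (z : α → S) {a : α} {s : Finset α}
    (ha : ∀ b ∈ s, a < b) : orderedProd z (insert a s) = z a * orderedProd z s := by
  rw [orderedProd, Finset.sort_insert _ (fun b hb => (ha b hb).le) fun h => (ha a h).false,
    List.map_cons, List.prod_cons, orderedProd]

theorem orderedProd_eq_prod_ofFn [Monoid S] (z : α → S) {s : Finset α} {k : ℕ} (hs : s.card = k) :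
    orderedProd z s = (List.ofFn fun i => z (s.orderEmbOfFin hs i)).prod := by
  rw [orderedProd, ← s.listMap_orderEmbOfFin_finRange hs, List.map_map, List.ofFn_eq_map]
  rfl

theorem coe_orderEmbOfFin_univ_fin (n : ℕ) :
    ⇑(Finset.univ.orderEmbOfFin (Finset.card_fin n)) = id :=
  (Finset.orderEmbOfFin_unique _ (fun _ => Finset.mem_univ _) strictMono_id).symm

end OrderedProd

section Grassmann

variable {α S : Type*} [Ring S] {z : α → S}

/-- A family of elements of a ring is Grassmann if its members square to zero and anticommute with
one another. -/
structure IsGrassmann (z : α → S) : Prop where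
  mul_self_eq_zero : ∀ a, z a * z a = 0
  mul_add_mul_swap : ∀ a b, z a * z b + z b * z a = 0

namespace IsGrassmann

theorem mul_swap (hz : IsGrassmann z) (a b : α) : z a * z b = -(z b * z a) :=
  eq_neg_of_add_eq_zero_left (hz.mul_add_mul_swap a b)

theorem sum_sum_mul_eq_zero (hz : IsGrassmann z) (s : Finset α) {c : α → α → S}
    (hc : ∀ a b, c a b = c b a) : ∑ a ∈ s, ∑ b ∈ s, z a * z b * c a b = 0 := by
  rw [← Finset.sum_product']
  refine Finset.sum_involution (fun p _ => p.swap) ?_ ?_ ?_ ?_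
  · rintro ⟨a, b⟩ -
    rw [Prod.fst_swap, Prod.snd_swap, hc b a, ← add_mul, hz.mul_add_mul_swap, zero_mul]
  · rintro ⟨a, b⟩ - hne heq
    obtain rfl : b = a := congrArg Prod.fst heq
    exact hne (by rw [hz.mul_self_eq_zero, zero_mul])
  · rintro ⟨a, b⟩ hp
    simpa [and_comm] using hp
  · exact fun p _ => p.swap_swap

theorem exists_alternatingMap (hz : IsGrassmann z) (n : ℕ) :
    ∃ g : (α →₀ ℤ) [⋀^Fin n]→ₗ[ℤ] S, ∀ u : Fin n → α,
      g (fun i => Finsupp.single (u i) 1) = (List.ofFn fun i => z (u i)).prod := by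
  have hsq (v : α →₀ ℤ) :
      Finsupp.linearCombination ℤ z v * Finsupp.linearCombination ℤ z v = 0 := by
    rw [Finsupp.linearCombination_apply, Finsupp.sum, Finset.sum_mul_sum,
      ← hz.sum_sum_mul_eq_zero v.support (c := fun a b => ((v a * v b : ℤ) : S))
        fun a b => by rw [mul_comm]]
    simp only [smul_mul_smul_comm]
    simp only [zsmul_eq_mul, Int.cast_comm]
  refine ⟨(ExteriorAlgebra.lift ℤ ⟨_, hsq⟩).toLinearMap.compAlternatingMap (ιMulti ℤ n),
    fun u => ?_⟩
  simp [ExteriorAlgebra.ιMulti_apply, map_list_prod, List.map_ofFn, Function.comp_def]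

theorem prod_ofFn_comp_perm (hz : IsGrassmann z) {n : ℕ} (u : Fin n → α)
    (π : Equiv.Perm (Fin n)) :
    (List.ofFn fun i => z (u (π i))).prod =
      (Equiv.Perm.sign π : ℤ) • (List.ofFn fun i => z (u i)).prod := by
  obtain ⟨g, hg⟩ := hz.exists_alternatingMap n
  rw [← hg u, ← hg fun i => u (π i), ← Units.smul_def, ← g.map_perm]
  rfl

theorem prod_ofFn_eq_zero (hz : IsGrassmann z) {n : ℕ} {u : Fin n → α}
    (hu : ¬Function.Injective u) : (List.ofFn fun i => z (u i)).prod = 0 := by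
  obtain ⟨g, hg⟩ := hz.exists_alternatingMap n
  rw [← hg]
  exact g.map_eq_zero_of_not_injective _ fun h => hu (h.of_comp (f := (Finsupp.single · 1)))

theorem prod_ofFn_mul (hz : IsGrassmann z) {n : ℕ} (u : Fin n → α) (a : α) :
    (List.ofFn fun i => z (u i)).prod * z a =
      (-1 : ℤ) ^ n • (z a * (List.ofFn fun i => z (u i)).prod) := by
  induction n with
  | zero => simp
  | succ n ih =>
    rw [List.ofFn_succ, List.prod_cons, mul_assoc, ih, mul_smul_comm, ← mul_assoc, hz.mul_swap,
      pow_succ, mul_neg_one, neg_smul, neg_mul, smul_neg, mul_assoc]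

variable [LinearOrder α]

theorem mul_orderedProd_of_mem (hz : IsGrassmann z) {a : α} {s : Finset α} (ha : a ∈ s) :
    z a * orderedProd z s = 0 := by
  induction s using Finset.induction_on_min with
  | empty => simp at ha
  | insert b s hb ih =>
    rw [orderedProd_insert_of_lt z hb, ← mul_assoc]
    obtain rfl | ha := Finset.mem_insert.mp ha
    · rw [hz.mul_self_eq_zero, zero_mul]
    · rw [hz.mul_swap, neg_mul, mul_assoc, ih ha, mul_zero, neg_zero]

theorem mul_orderedProd_of_notMem (hz : IsGrassmann z) {a : α} {s : Finset α} (ha : a ∉ s) :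
    z a * orderedProd z s = (-1 : ℤ) ^ (s.filter (· < a)).card • orderedProd z (insert a s) := by
  induction s using Finset.induction_on_min with
  | empty => simp [orderedProd]
  | insert b s hb ih =>
    obtain ⟨hab, has⟩ : a ≠ b ∧ a ∉ s := by simpa using ha
    rcases lt_or_gt_of_ne hab with hab | hba
    · have hlt : ∀ c ∈ insert b s, a < c := by
        simpa [hab] using fun c hc => hab.trans (hb c hc)
      have hempty : (insert b s).filter (· < a) = ∅ :=
        Finset.filter_eq_empty_iff.mpr fun c hc => (hlt c hc).not_gt
      rw [hempty, Finset.card_empty, pow_zero, one_smul, orderedProd_insert_of_lt z hlt]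
    · have hlt : ∀ c ∈ insert a s, b < c := by simpa [hba] using hb
      have hbs : b ∉ s.filter (· < a) := fun h => (hb b (Finset.mem_filter.mp h).1).false
      rw [orderedProd_insert_of_lt z hb, ← mul_assoc, hz.mul_swap, neg_mul, mul_assoc, ih has,
        Finset.insert_comm, orderedProd_insert_of_lt z hlt, Finset.filter_insert, if_pos hba,
        Finset.card_insert_of_notMem hbs, pow_succ, mul_neg_one, neg_smul, mul_smul_comm]

theorem orderedProd_mul_orderedProd_of_disjoint (hz : IsGrassmann z) {s t : Finset α}
    (hst : Disjoint s t) :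
    orderedProd z s * orderedProd z t =
      (-1 : ℤ) ^ (∑ a ∈ s, (t.filter (· < a)).card) • orderedProd z (s ∪ t) := by
  induction s using Finset.induction_on_min with
  | empty => simp
  | insert a s ha ih =>
    have has : a ∉ s := fun h => (ha a h).false
    obtain ⟨hat, hst⟩ := Finset.disjoint_insert_left.mp hst
    have hfilter : (s ∪ t).filter (· < a) = t.filter (· < a) := by
      rw [Finset.filter_union, Finset.filter_eq_empty_iff.mpr fun c hc => (ha c hc).not_gt,
        Finset.empty_union]
    rw [orderedProd_insert_of_lt z ha, mul_assoc, ih hst, mul_smul_comm,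
      hz.mul_orderedProd_of_notMem (by simp [has, hat]), hfilter, smul_smul, ← pow_add,
      Finset.sum_insert has, add_comm, Finset.insert_union]

theorem orderedProd_mul_orderedProd_of_not_disjoint (hz : IsGrassmann z) {s t : Finset α}
    (hst : ¬Disjoint s t) : orderedProd z s * orderedProd z t = 0 := by
  induction s using Finset.induction_on_min with
  | empty => simp at hst
  | insert a s ha ih =>
    rw [orderedProd_insert_of_lt z ha, mul_assoc]
    by_cases h : Disjoint s t
    · have hat : a ∈ t := by simpa [Finset.disjoint_insert_left, h] using hst
      rw [hz.orderedProd_mul_orderedProd_of_disjoint h, mul_smul_comm,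
        hz.mul_orderedProd_of_mem (Finset.mem_union_right s hat), smul_zero]
    · rw [ih h, mul_zero]

end IsGrassmann

end Grassmann

section ColumnDeterminant

theorem cdetSub_eq_sum_prod_ofFn (B : Matrix (Fin m) (Fin m) R) {s t : Finset (Fin m)} {k : ℕ}
    (hs : s.card = k) (ht : t.card = k) :
    cdetSub B s t = ∑ π : Equiv.Perm (Fin k), (Equiv.Perm.sign π : ℤ) •
      (List.ofFn fun i => B (s.orderEmbOfFin hs (π i)) (t.orderEmbOfFin ht i)).prod := by
  subst ht
  simp only [cdetSub, dif_pos hs, List.ofFn_eq_map, Finset.coe_orderIsoOfFin_apply]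

theorem cdetSub_of_card_ne (B : Matrix (Fin m) (Fin m) R) {s t : Finset (Fin m)}
    (h : s.card ≠ t.card) : cdetSub B s t = 0 :=
  dif_neg h

theorem cdetSub_univ (B : Matrix (Fin m) (Fin m) R) :
    cdetSub B Finset.univ Finset.univ = cdet B := by
  simp only [cdetSub_eq_sum_prod_ofFn B (Finset.card_fin m) (Finset.card_fin m),
    coe_orderEmbOfFin_univ_fin, id, cdet, List.ofFn_eq_map]

end ColumnDeterminant

section MinorExpansion

theorem sum_snoc {α M : Type*} [Fintype α] [AddCommMonoid M] {n : ℕ} (F : (Fin (n + 1) → α) → M) :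
    ∑ f, F f = ∑ f : Fin n → α, ∑ a, F (Fin.snoc f a) := by
  rw [← (Fin.snocEquiv fun _ => α).sum_comp, Fintype.sum_prod_type_right]
  rfl

variable {α β S : Type*} [Fintype α] [Ring S] {ρ : R →+* S} {z : α → S}

theorem prod_ofFn_vecMul_of_commute (hρ : ∀ a r, Commute (z a) (ρ r)) (B : Matrix α β R) {n : ℕ}
    (u : Fin n → β) :
    (List.ofFn fun i => (z ᵥ* B.map ρ) (u i)).prod =
      ∑ f : Fin n → α, (List.ofFn fun i => z (f i)).prod *
        ρ (List.ofFn fun i => B (f i) (u i)).prod := by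
  induction n with
  | zero => simp
  | succ n ih =>
    simp only [List.ofFn_succ', List.concat_eq_append, List.prod_append, List.prod_singleton,
      sum_snoc, Fin.snoc_castSucc, Fin.snoc_last, ih, map_mul]
    rw [Finset.sum_mul]
    refine Finset.sum_congr rfl fun f _ => ?_
    rw [Matrix.vecMul, dotProduct, Finset.mul_sum]
    refine Finset.sum_congr rfl fun a _ => ?_
    rw [Matrix.map_apply, mul_assoc, ← mul_assoc (ρ _), ← (hρ a _).eq]
    simp only [mul_assoc]

/- As the family `z ᵥ* B.map ρ` anticommutes, the last factor can be expanded at the far left; its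
entry of `B` then moves right through the remaining factors, so that in the end the entries stand in
the order of the column determinant. -/
theorem IsGrassmann.prod_ofFn_vecMul_of_commute_vecMul (hz : IsGrassmann z) {B : Matrix α β R}
    (hw : IsGrassmann (z ᵥ* B.map ρ)) (hρ : ∀ b r, Commute ((z ᵥ* B.map ρ) b) (ρ r)) {n : ℕ}
    (u : Fin n → β) :
    (List.ofFn fun i => (z ᵥ* B.map ρ) (u i)).prod =
      ∑ f : Fin n → α, (List.ofFn fun i => z (f i)).prod *
        ρ (List.ofFn fun i => B (f i) (u i)).prod := by
  induction n with
  | zero => simp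
  | succ n ih =>
    have hcomm (r : R) :
        Commute (ρ r) (List.ofFn fun i : Fin n => (z ᵥ* B.map ρ) (u i.castSucc)).prod :=
      .list_prod_right _ _ fun x hx => by
        obtain ⟨i, rfl⟩ := List.mem_ofFn.mp hx
        exact (hρ _ r).symm
    simp only [List.ofFn_succ', List.concat_eq_append, List.prod_append, List.prod_singleton,
      sum_snoc, Fin.snoc_castSucc, Fin.snoc_last, map_mul]
    rw [hw.prod_ofFn_mul]
    conv_lhs => enter [2, 1]; rw [Matrix.vecMul, dotProduct]
    rw [Finset.sum_mul, Finset.smul_sum, Finset.sum_comm]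
    refine Finset.sum_congr rfl fun a _ => ?_
    rw [Matrix.map_apply, mul_assoc, (hcomm _).eq, ih, Finset.sum_mul, Finset.mul_sum,
      Finset.smul_sum]
    refine Finset.sum_congr rfl fun f _ => ?_
    rw [hz.prod_ofFn_mul, smul_mul_assoc, mul_assoc, mul_assoc]

theorem sum_filter_image_univ_eq [LinearOrder α] {M : Type*} [AddCommMonoid M] {s : Finset α}
    {k : ℕ} (hs : s.card = k) (F : (Fin k → α) → M) :
    ∑ f with Finset.univ.image f = s, F f =
      ∑ π : Equiv.Perm (Fin k), F fun i => s.orderEmbOfFin hs (π i) := by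
  symm
  refine Finset.sum_nbij (fun π i => s.orderEmbOfFin hs (π i)) ?_ ?_ ?_ fun _ _ => rfl
  · intro π _
    simp only [Finset.mem_filter_univ]
    rw [← Function.comp_def, ← Finset.image_image, Finset.image_univ_equiv,
      Finset.image_orderEmbOfFin_univ]
  · exact fun π _ σ _ h => Equiv.ext fun i => (s.orderEmbOfFin hs).injective (congrFun h i)
  · intro f hf
    have hfs : Finset.univ.image f = s := by simpa using hf
    have hmem (i : Fin k) : f i ∈ s := hfs ▸ Finset.mem_image_of_mem f (Finset.mem_univ i)
    have hcard : (Finset.univ.image f).card = (Finset.univ : Finset (Fin k)).card := by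
      rw [hfs, hs, Finset.card_fin]
    have hinj : Function.Injective f := by
      simpa [Set.injOn_univ] using Finset.card_image_iff.mp hcard
    let p (i : Fin k) : Fin k := (s.orderIsoOfFin hs).symm ⟨f i, hmem i⟩
    have hp : Function.Injective p := fun i j hij => hinj (by simpa [p] using hij)
    refine ⟨.ofBijective p (Finite.injective_iff_bijective.mp hp), Finset.mem_univ _, ?_⟩
    funext i
    simp [p, ← Finset.coe_orderIsoOfFin_apply]

theorem IsGrassmann.sum_prod_ofFn_mul_eq_sum_orderedProd {z : Fin m → S} (hz : IsGrassmann z)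
    (B : Matrix (Fin m) (Fin m) R) (t : Finset (Fin m)) :
    ∑ f : Fin t.card → Fin m, (List.ofFn fun i => z (f i)).prod *
        ρ (List.ofFn fun i => B (f i) (t.orderEmbOfFin rfl i)).prod =
      ∑ s, orderedProd z s * ρ (cdetSub B s t) := by
  rw [← Finset.sum_fiberwise _ fun f : Fin t.card → Fin m => Finset.univ.image f]
  refine Finset.sum_congr rfl fun s _ => ?_
  by_cases hs : s.card = t.card
  · rw [sum_filter_image_univ_eq hs, cdetSub_eq_sum_prod_ofFn B hs rfl, map_sum, Finset.mul_sum,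
      orderedProd_eq_prod_ofFn z hs]
    refine Finset.sum_congr rfl fun π _ => ?_
    rw [hz.prod_ofFn_comp_perm, map_zsmul, smul_mul_assoc, mul_smul_comm]
  · rw [cdetSub_of_card_ne B hs, map_zero, mul_zero]
    refine Finset.sum_eq_zero fun f hf => ?_
    obtain rfl : Finset.univ.image f = s := by simpa using hf
    have hf : ¬Function.Injective f := fun h => hs (by simp [Finset.card_image_of_injective _ h])
    rw [hz.prod_ofFn_eq_zero hf, zero_mul]

theorem IsGrassmann.orderedProd_vecMul_of_commute {z : Fin m → S} (hz : IsGrassmann z)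
    (hρ : ∀ a r, Commute (z a) (ρ r)) (B : Matrix (Fin m) (Fin m) R) (t : Finset (Fin m)) :
    orderedProd (z ᵥ* B.map ρ) t = ∑ s, orderedProd z s * ρ (cdetSub B s t) := by
  rw [orderedProd_eq_prod_ofFn _ rfl, prod_ofFn_vecMul_of_commute hρ,
    hz.sum_prod_ofFn_mul_eq_sum_orderedProd]

theorem IsGrassmann.orderedProd_vecMul_of_commute_vecMul {z : Fin m → S} (hz : IsGrassmann z)
    {B : Matrix (Fin m) (Fin m) R} (hw : IsGrassmann (z ᵥ* B.map ρ))
    (hρ : ∀ b r, Commute ((z ᵥ* B.map ρ) b) (ρ r)) (t : Finset (Fin m)) :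
    orderedProd (z ᵥ* B.map ρ) t = ∑ s, orderedProd z s * ρ (cdetSub B s t) := by
  rw [orderedProd_eq_prod_ofFn _ rfl, hz.prod_ofFn_vecMul_of_commute_vecMul hw hρ,
    hz.sum_prod_ofFn_mul_eq_sum_orderedProd]

theorem sum_mul_cdetSub_eq_compl (B : Matrix (Fin m) (Fin m) R) {r t : Finset (Fin m)}
    (hrt : rᶜ.card = t.card) {g : Finset (Fin m) → S} (hg : ∀ s, ¬Disjoint s r → g s = 0) :
    ∑ s, g s * ρ (cdetSub B s t) = g rᶜ * ρ (cdetSub B rᶜ t) := by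
  refine Fintype.sum_eq_single _ fun s hs => ?_
  by_cases hsr : Disjoint s r
  · have hsub : s ⊆ rᶜ := le_compl_iff_disjoint_right.mpr hsr
    have hcard : s.card ≠ t.card := fun h =>
      hs (Finset.eq_of_subset_of_card_le hsub (hrt.trans h.symm).le)
    rw [cdetSub_of_card_ne B hcard, map_zero, mul_zero]
  · rw [hg s hsr, zero_mul]

end MinorExpansion

section ComplementSign

theorem sum_card_filter_lt {α : Type*} [LinearOrder α] (s : Finset α) :
    ∑ a ∈ s, (s.filter (· < a)).card = s.card.choose 2 := by
  induction s using Finset.induction_on_max with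
  | empty => simp
  | insert a s ha ih =>
    have has : a ∉ s := fun h => (ha a h).false
    have hlt : ∀ b ∈ s, (insert a s).filter (· < b) = s.filter (· < b) := fun b hb => by
      rw [Finset.filter_insert, if_neg (ha b hb).not_gt]
    rw [Finset.sum_insert has, Finset.sum_congr rfl fun b hb => by rw [hlt b hb], ih,
      Finset.filter_insert, if_neg (lt_irrefl a), Finset.filter_true_of_mem ha,
      Finset.card_insert_of_notMem has, Nat.choose_succ_succ' s.card 1, Nat.choose_one_right]

theorem sum_card_filter_compl_lt_add_choose (s : Finset (Fin m)) :
    ∑ a ∈ s, (sᶜ.filter (· < a)).card + s.card.choose 2 = ∑ a ∈ s, (a : ℕ) := by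
  rw [← sum_card_filter_lt, ← Finset.sum_add_distrib]
  refine Finset.sum_congr rfl fun a _ => ?_
  rw [← Finset.card_union_of_disjoint (Finset.disjoint_filter_filter disjoint_compl_left),
    ← Finset.filter_union, Finset.union_comm, Finset.union_compl, Finset.filter_gt_eq_Iio,
    Fin.card_Iio]

theorem IsGrassmann.orderedProd_mul_orderedProd_compl {S : Type*} [Ring S] {z : Fin m → S}
    (hz : IsGrassmann z) (s : Finset (Fin m)) :
    orderedProd z s * orderedProd z sᶜ =
      (-1 : ℤ) ^ (∑ a ∈ s, (a : ℕ) + s.card.choose 2) • orderedProd z Finset.univ := by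
  rw [hz.orderedProd_mul_orderedProd_of_disjoint disjoint_compl_right, Finset.union_compl,
    ← sum_card_filter_compl_lt_add_choose, add_assoc, pow_add _ _ (_ + _),
    Even.neg_one_pow ⟨_, rfl⟩, mul_one]

theorem neg_one_pow_sum_compl_mul_neg_one_pow_sum_compl {I J : Finset (Fin m)}
    (hIJ : I.card = J.card) :
    (-1 : ℤ) ^ (∑ a ∈ Iᶜ, (a : ℕ) + Iᶜ.card.choose 2) *
        (-1 : ℤ) ^ (∑ a ∈ Jᶜ, (a : ℕ) + Jᶜ.card.choose 2) =
      (-1 : ℤ) ^ ((∑ i ∈ I, ((i : ℕ) + 1)) + ∑ j ∈ J, ((j : ℕ) + 1)) := by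
  have hcard : Iᶜ.card = Jᶜ.card := by simp only [Finset.card_compl, hIJ]
  have hI := Finset.sum_add_sum_compl I fun i : Fin m => (i : ℕ)
  have hJ := Finset.sum_add_sum_compl J fun j : Fin m => (j : ℕ)
  rw [← pow_add, hcard]
  apply neg_one_pow_congr
  simp only [Finset.sum_add_distrib, Finset.sum_const, smul_eq_mul, mul_one, hIJ, Nat.even_iff]
  omega

end ComplementSign

section RightQuantum

theorem rightQuantum_iff_lie {A : Matrix (Fin m) (Fin m) R} :
    RightQuantum A ↔ (∀ i j k, ⁅A j k, A i k⁆ = 0) ∧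
      ∀ i j k l, k ≠ l → ⁅A i k, A j l⁆ = ⁅A j k, A i l⁆ := by
  simp only [RightQuantum, Ring.lie_def, sub_eq_zero, sub_eq_sub_iff_add_eq_add, add_comm]

theorem lie_sub_sub_of_forall_commute {c d : R} (hc : ∀ x, Commute c x) (hd : ∀ x, Commute d x)
    (x y : R) : ⁅c - x, d - y⁆ = ⁅x, y⁆ := by
  simp only [Ring.lie_def, sub_mul, mul_sub, (hc _).eq, (hd x).eq]
  abel

theorem RightQuantum.one_sub_s9 {A : Matrix (Fin m) (Fin m) R} (hA : RightQuantum A) :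
    RightQuantum (1 - A) := by
  have hone (i j : Fin m) (x : R) : Commute ((1 : Matrix (Fin m) (Fin m) R) i j) x := by
    rw [Matrix.one_apply]
    split_ifs
    exacts [.one_left x, .zero_left x]
  have hlie (i j k l : Fin m) : ⁅(1 - A) i k, (1 - A) j l⁆ = ⁅A i k, A j l⁆ :=
    lie_sub_sub_of_forall_commute (hone i k) (hone j l) _ _
  simpa only [rightQuantum_iff_lie, hlie] using hA

theorem RightQuantum.mul_add_mul_comm_s9 {M : Matrix (Fin m) (Fin m) R} (hM : RightQuantum M)
    (i j k l : Fin m) : M i k * M j l + M i l * M j k = M j k * M i l + M j l * M i k := by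
  obtain rfl | hkl := eq_or_ne k l
  · rw [hM.1 i j k]
  · rw [add_comm (M j k * M i l), ← sub_eq_sub_iff_add_eq_add]
    exact hM.2 i j k l hkl

variable {S : Type*} [Ring S] {ρ : R →+* S} {z : Fin m → S}

theorem IsGrassmann.vecMul (hz : IsGrassmann z) (hρ : ∀ a r, Commute (z a) (ρ r))
    {M : Matrix (Fin m) (Fin m) R} (hM : RightQuantum M) : IsGrassmann (z ᵥ* M.map ρ) := by
  have hmul (k l : Fin m) : (z ᵥ* M.map ρ) k * (z ᵥ* M.map ρ) l =
      ∑ i, ∑ j, z i * z j * ρ (M i k * M j l) := by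
    simp only [Matrix.vecMul, dotProduct, Matrix.map_apply, Finset.sum_mul_sum, map_mul]
    refine Finset.sum_congr rfl fun i _ => Finset.sum_congr rfl fun j _ => ?_
    rw [mul_assoc, ← mul_assoc (ρ _), ← (hρ j _).eq]
    simp only [mul_assoc]
  refine ⟨fun k => ?_, fun k l => ?_⟩
  · rw [hmul]
    exact hz.sum_sum_mul_eq_zero _ fun i j => by rw [hM.1]
  · simp only [hmul, ← Finset.sum_add_distrib, ← mul_add, ← map_add]
    exact hz.sum_sum_mul_eq_zero _ fun i j => by rw [hM.mul_add_mul_comm_s9, add_comm]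

end RightQuantum

section Jacobi

variable {S : Type*} [Ring S] {ρ : R →+* S} {z : Fin m → S}

theorem IsGrassmann.orderedProd_vecMul_mul_orderedProd (hz : IsGrassmann z)
    (hρ : ∀ a r, Commute (z a) (ρ r)) (B : Matrix (Fin m) (Fin m) R) {r t : Finset (Fin m)}
    (hrt : rᶜ.card = t.card) :
    orderedProd (z ᵥ* B.map ρ) t * orderedProd z r =
      orderedProd z rᶜ * orderedProd z r * ρ (cdetSub B rᶜ t) := by
  have hcomm (x : R) : Commute (ρ x) (orderedProd z r) :=
    .list_prod_right _ _ fun y hy => by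
      obtain ⟨a, -, rfl⟩ := List.mem_map.mp hy
      exact (hρ a x).symm
  rw [hz.orderedProd_vecMul_of_commute hρ, Finset.sum_mul,
    ← sum_mul_cdetSub_eq_compl B hrt (g := fun s => orderedProd z s * orderedProd z r)
      fun s hs => hz.orderedProd_mul_orderedProd_of_not_disjoint hs]
  exact Finset.sum_congr rfl fun s _ => by rw [mul_assoc, (hcomm _).eq, mul_assoc]

theorem IsGrassmann.orderedProd_mul_orderedProd_vecMul (hz : IsGrassmann z)
    {B : Matrix (Fin m) (Fin m) R} (hw : IsGrassmann (z ᵥ* B.map ρ))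
    (hρ : ∀ b r, Commute ((z ᵥ* B.map ρ) b) (ρ r)) {r t : Finset (Fin m)}
    (hrt : rᶜ.card = t.card) :
    orderedProd z r * orderedProd (z ᵥ* B.map ρ) t =
      orderedProd z r * orderedProd z rᶜ * ρ (cdetSub B rᶜ t) := by
  rw [hz.orderedProd_vecMul_of_commute_vecMul hw hρ, Finset.mul_sum,
    ← sum_mul_cdetSub_eq_compl B hrt (g := fun s => orderedProd z r * orderedProd z s)
      fun s hs => hz.orderedProd_mul_orderedProd_of_not_disjoint fun h => hs h.symm]
  exact Finset.sum_congr rfl fun s _ => (mul_assoc ..).symm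

theorem IsGrassmann.orderedProd_vecMul_univ (hz : IsGrassmann z)
    (hρ : ∀ a r, Commute (z a) (ρ r)) (B : Matrix (Fin m) (Fin m) R) :
    orderedProd (z ᵥ* B.map ρ) Finset.univ = orderedProd z Finset.univ * ρ (cdet B) := by
  simpa [cdetSub_univ] using
    hz.orderedProd_vecMul_mul_orderedProd hρ B (r := ∅) (t := Finset.univ) (by simp)

theorem IsGrassmann.orderedProd_univ_mul_cdet_mul_cdetSub (hz : IsGrassmann z)
    (hρ : ∀ a r, Commute (z a) (ρ r)) {M C : Matrix (Fin m) (Fin m) R} (hM : RightQuantum M)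
    (hMC : M * C = 1) {I J : Finset (Fin m)} (hIJ : I.card = J.card) :
    (-1 : ℤ) ^ (∑ a ∈ Iᶜ, (a : ℕ) + Iᶜ.card.choose 2) •
        (orderedProd z Finset.univ * ρ (cdet M * cdetSub C I J)) =
      (-1 : ℤ) ^ (∑ a ∈ Jᶜ, (a : ℕ) + Jᶜ.card.choose 2) •
        (orderedProd z Finset.univ * ρ (cdetSub M Jᶜ Iᶜ)) := by
  set y := z ᵥ* M.map ρ with hy
  have hyG : IsGrassmann y := hz.vecMul hρ hM
  have hyC : y ᵥ* C.map ρ = z := by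
    rw [hy, Matrix.vecMul_vecMul, ← Matrix.map_mul, hMC, Matrix.map_one _ (map_zero ρ) (map_one ρ),
      Matrix.vecMul_one]
  have hfst : orderedProd y Iᶜ * orderedProd z J =
      orderedProd z Jᶜ * orderedProd z J * ρ (cdetSub M Jᶜ Iᶜ) :=
    hz.orderedProd_vecMul_mul_orderedProd hρ M (by simp only [Finset.card_compl, hIJ])
  have hsnd : orderedProd y Iᶜ * orderedProd z J =
      orderedProd y Iᶜ * orderedProd y I * ρ (cdetSub C I J) := by
    have h := hyG.orderedProd_mul_orderedProd_vecMul (B := C) (hyC.symm ▸ hz) (hyC.symm ▸ hρ)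
      (r := Iᶜ) (t := J) (by rw [compl_compl, hIJ])
    rwa [hyC, compl_compl] at h
  have hyI := hyG.orderedProd_mul_orderedProd_compl Iᶜ
  have hzJ := hz.orderedProd_mul_orderedProd_compl Jᶜ
  rw [compl_compl] at hyI hzJ
  have hyz : orderedProd y Finset.univ = orderedProd z Finset.univ * ρ (cdet M) :=
    hz.orderedProd_vecMul_univ hρ M
  rw [map_mul, ← mul_assoc, ← hyz, ← smul_mul_assoc, ← hyI, ← hsnd, hfst, hzJ, smul_mul_assoc]

end Jacobi

section GrassmannAlgebra

/-- The Grassmann variables of the exterior algebra on `m` generators with coefficients extended to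
`R`. The exterior algebra is taken over `ℤ` because `R` need not be commutative; its generators
commute with `R`. -/
def grassmannVar (R : Type*) [Ring R] (i : Fin m) :
    ExteriorAlgebra ℤ (Fin m → ℤ) ⊗[ℤ] R :=
  ι ℤ (Pi.single i 1) ⊗ₜ 1

theorem isGrassmann_grassmannVar : IsGrassmann (grassmannVar (m := m) R) where
  mul_self_eq_zero i := by
    rw [grassmannVar, Algebra.TensorProduct.tmul_mul_tmul, ExteriorAlgebra.ι_sq_zero,
      TensorProduct.zero_tmul]
  mul_add_mul_swap i j := by
    simp only [grassmannVar, Algebra.TensorProduct.tmul_mul_tmul, ← TensorProduct.add_tmul,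
      ExteriorAlgebra.ι_add_mul_swap, TensorProduct.zero_tmul]

theorem commute_grassmannVar_includeRight (i : Fin m) (r : R) :
    Commute (grassmannVar R i)
      ((Algebra.TensorProduct.includeRight : R →ₐ[ℤ] ExteriorAlgebra ℤ (Fin m → ℤ) ⊗[ℤ] R) r) := by
  simp [Commute, SemiconjBy, grassmannVar]

theorem orderedProd_univ_grassmannVar :
    orderedProd (grassmannVar (m := m) R) Finset.univ =
      ιMulti ℤ m (Pi.basisFun ℤ (Fin m)) ⊗ₜ 1 := by
  rw [orderedProd_eq_prod_ofFn _ (Finset.card_fin m), coe_orderEmbOfFin_univ_fin,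
    ExteriorAlgebra.ιMulti_apply, ← Algebra.TensorProduct.includeLeft_apply (S := ℤ), map_list_prod,
    List.map_ofFn]
  simp [Function.comp_def, grassmannVar]

theorem injective_ιMulti_basis_tmul {K V N : Type*} [CommRing K] [AddCommGroup V] [Module K V]
    [AddCommGroup N] [Module K N] {n : ℕ} (b : Module.Basis (Fin n) K V) :
    Function.Injective fun x : N => ιMulti K n b ⊗ₜ[K] x := by
  let coeff : ExteriorAlgebra K V →ₗ[K] K :=
    ExteriorAlgebra.liftAlternating (Pi.single n b.det)
  have hcoeff : coeff (ιMulti K n b) = 1 := by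
    rw [ExteriorAlgebra.liftAlternating_apply_ιMulti, Pi.single_eq_same, b.det_self]
  refine Function.LeftInverse.injective (g := TensorProduct.lid K N ∘ coeff.rTensor N) fun x => ?_
  simp [hcoeff]

end GrassmannAlgebra

theorem rightQuantum_jacobi_ratio_general {M C : Matrix (Fin m) (Fin m) R} (hM : RightQuantum M)
    (hMC : M * C = 1) {I J : Finset (Fin m)} (hIJ : I.card = J.card) :
    cdet M * cdetSub C I J =
      (-1 : R) ^ ((∑ i ∈ I, ((i : ℕ) + 1)) + ∑ j ∈ J, ((j : ℕ) + 1)) * cdetSub M Jᶜ Iᶜ := by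
  let ρ : R →+* ExteriorAlgebra ℤ (Fin m → ℤ) ⊗[ℤ] R :=
    (Algebra.TensorProduct.includeRight : R →ₐ[ℤ] _).toRingHom
  have hinj : Function.Injective fun r => orderedProd (grassmannVar R) Finset.univ * ρ r := by
    simpa [ρ, orderedProd_univ_grassmannVar] using
      injective_ιMulti_basis_tmul (N := R) (Pi.basisFun ℤ (Fin m))
  have hsigned := isGrassmann_grassmannVar.orderedProd_univ_mul_cdet_mul_cdetSub (ρ := ρ)
    commute_grassmannVar_includeRight hM hMC hIJ
  have hpow (k : ℕ) (x : R) : (-1 : R) ^ k * x = (-1 : ℤ) ^ k • x := by simp [zsmul_eq_mul]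
  apply hinj
  beta_reduce
  rw [hpow, map_zsmul, mul_smul_comm, ← neg_one_pow_sum_compl_mul_neg_one_pow_sum_compl hIJ,
    mul_smul, ← hsigned, smul_smul, ← pow_add, Even.neg_one_pow ⟨_, rfl⟩, one_smul]

theorem rightQuantum_jacobi_ratio (hm : 1 ≤ m)
    (A : Matrix (Fin m) (Fin m) R) (hA : RightQuantum A)
    (C : Matrix (Fin m) (Fin m) R) (hC₁ : (1 - A) * C = 1) (hC₂ : C * (1 - A) = 1)
    (I J : Finset (Fin m)) (hIJ : I.card = J.card) :
    cdet (1 - A) * cdetSub C I J =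
      (-1 : R) ^ ((∑ i ∈ I, ((i : ℕ) + 1)) + ∑ j ∈ J, ((j : ℕ) + 1)) *
        cdetSub (1 - A) Jᶜ Iᶜ :=
  rightQuantum_jacobi_ratio_general hA.one_sub_s9 hC₁ hIJ
end

section
/- Let R be a commutative ring, m ≥ 1, and A = (a_{ij}) an m×m matrix over R. In the multivariate formal power series ring R[[x₁,…,x_m]], let X = diag(x₁,…,x_m). Then Σ_r G(r) x^r = det(I − XA)⁻¹, where the sum is over all nonnegative integer vectors r = (r₁,…,r_m), G(r) ∈ R is the coefficient of x^r = x₁^{r₁}⋯x_m^{r_m} in ∏_{i=1}^m (a_{i1}x₁ + ⋯ + a_{im}x_m)^{r_i}, and the inverse is taken in R[[x₁,…,x_m]] (the series det(I − XA) has constant term 1, hence is invertible). -/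
/-!
For polynomials `L i`, let `S = ∑ r, [x ^ r] (∏ i, L i ^ r i) x ^ r`. Multiplying `S` by `x i`
shifts its coefficients, which amounts to replacing `L i ^ r i` by `x i * L i ^ (r i - 1)`. Hence,
by row-multilinearity, the `r`-th coefficient of `det (1 - X A) * S` is that of `det N`, where
`N i j = δ i j * L i ^ r i - x i * a i j * L i ^ (r i - 1)`. When `L i = ∑ j, a i j * x j`, the
`i`-th entry of `N x` vanishes if `r i ≠ 0` and is a multiple of `x i` if `r i = 0`. Cramer's rule
thus puts `det N * x k` in the ideal generated by the `x i` with `r i = 0`; if `r k ≠ 0`, no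
element of that ideal involves the monomial `x k * x ^ r`.
-/

open Matrix

section DiagonalSeries

variable {R ι : Type*} [CommRing R]

/-- The diagonal of a family of polynomials indexed by exponents: the power series whose
coefficient at `x ^ r` is that of the `r`-th polynomial of the family. -/
def diagonalSeries (g : (ι →₀ ℕ) → MvPolynomial ι R) : MvPowerSeries ι R :=
  fun r => (g r).coeff r

lemma coeff_diagonalSeries (g : (ι →₀ ℕ) → MvPolynomial ι R) (r : ι →₀ ℕ) :
    MvPowerSeries.coeff r (diagonalSeries g) = (g r).coeff r :=
  rfl

lemma C_mul_diagonalSeries (a : R) (g : (ι →₀ ℕ) → MvPolynomial ι R) :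
    MvPowerSeries.C a * diagonalSeries g = diagonalSeries fun r => MvPolynomial.C a * g r := by
  ext r
  simp only [MvPowerSeries.coeff_C_mul, coeff_diagonalSeries, MvPolynomial.coeff_C_mul]

-- If `r i = 0` then `r - single i 1 = r`, but the factor `X i` annihilates the coefficient.
lemma X_mul_diagonalSeries (i : ι) (g : (ι →₀ ℕ) → MvPolynomial ι R) :
    MvPowerSeries.X i * diagonalSeries g =
      diagonalSeries fun r => MvPolynomial.X i * g (r - Finsupp.single i 1) := by
  ext r
  rw [MvPowerSeries.X, MvPowerSeries.coeff_monomial_mul, coeff_diagonalSeries,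
    coeff_diagonalSeries, MvPolynomial.X, MvPolynomial.coeff_monomial_mul']

lemma diagonalSeries_sub (g h : (ι →₀ ℕ) → MvPolynomial ι R) :
    diagonalSeries (fun r => g r - h r) = diagonalSeries g - diagonalSeries h := by
  ext r
  simp only [map_sub, coeff_diagonalSeries, MvPolynomial.coeff_sub]

variable [Fintype ι]

lemma C_sub_X_mul_C_mul_diagonalSeries_prod [DecidableEq ι] (i : ι) (p q : R)
    (f : ι → ℕ → MvPolynomial ι R) :
    (MvPowerSeries.C p - MvPowerSeries.X i * MvPowerSeries.C q) *
        diagonalSeries (fun r => ∏ j, f j (r j)) =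
      diagonalSeries fun r => ∏ j, Function.update f i (fun n =>
        f i n * MvPolynomial.C p - MvPolynomial.X i * f i (n - 1) * MvPolynomial.C q) j (r j) := by
  rw [sub_mul, mul_assoc, C_mul_diagonalSeries, C_mul_diagonalSeries, X_mul_diagonalSeries,
    ← diagonalSeries_sub]
  congr 1 with r : 1
  have prod_shift : ∏ j ∈ {i}ᶜ, f j (r j - Finsupp.single i 1 j) = ∏ j ∈ {i}ᶜ, f j (r j) :=
    Finset.prod_congr rfl fun j hj => by
      have hji : j ≠ i := by simpa using hj
      simp [hji]
  have prod_update (h : ℕ → MvPolynomial ι R) :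
      ∏ j ∈ {i}ᶜ, Function.update f i h j (r j) = ∏ j ∈ {i}ᶜ, f j (r j) :=
    Finset.prod_congr rfl fun j hj => by
      have hji : j ≠ i := by simpa using hj
      simp [hji]
  simp only [Fintype.prod_eq_mul_prod_compl i, Finsupp.tsub_apply, prod_shift, prod_update,
    Function.update_self, Finsupp.single_eq_same]
  ring

lemma prod_C_sub_X_mul_C_mul_diagonalSeries_prod (p q : ι → R) (f : ι → ℕ → MvPolynomial ι R) :
    (∏ i, (MvPowerSeries.C (p i) - MvPowerSeries.X i * MvPowerSeries.C (q i))) *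
        diagonalSeries (fun r => ∏ i, f i (r i)) =
      diagonalSeries fun r => ∏ i, (f i (r i) * MvPolynomial.C (p i) -
        MvPolynomial.X i * f i (r i - 1) * MvPolynomial.C (q i)) := by
  classical
  have partial_prod (s : Finset ι) :
      (∏ i ∈ s, (MvPowerSeries.C (p i) - MvPowerSeries.X i * MvPowerSeries.C (q i))) *
          diagonalSeries (fun r => ∏ i, f i (r i)) =
        diagonalSeries fun r => ∏ i, s.piecewise (fun i n => f i n * MvPolynomial.C (p i) -
          MvPolynomial.X i * f i (n - 1) * MvPolynomial.C (q i)) f i (r i) := by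
    induction s using Finset.induction_on with
    | empty => simp only [Finset.prod_empty, one_mul, Finset.piecewise_empty]
    | insert a s ha ih =>
      rw [Finset.prod_insert ha, mul_assoc, ih, C_sub_X_mul_C_mul_diagonalSeries_prod,
        Finset.piecewise_eq_of_notMem _ _ _ ha, Finset.piecewise_insert]
  simpa only [Finset.piecewise_univ] using partial_prod Finset.univ

lemma det_sub_diagonal_X_mul_mul_diagonalSeries_prod [DecidableEq ι] (P Q : Matrix ι ι R)
    (f : ι → ℕ → MvPolynomial ι R) :
    (P.map MvPowerSeries.C - diagonal MvPowerSeries.X * Q.map MvPowerSeries.C).det *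
        diagonalSeries (fun r => ∏ i, f i (r i)) =
      diagonalSeries fun r => (diagonal (fun i => f i (r i)) * P.map MvPolynomial.C -
        diagonal (fun i => MvPolynomial.X i * f i (r i - 1)) * Q.map MvPolynomial.C).det := by
  ext r
  rw [coeff_diagonalSeries, ← det_transpose, det_apply, ← det_transpose, det_apply,
    Finset.sum_mul, map_sum, MvPolynomial.coeff_sum]
  refine Finset.sum_congr rfl fun τ _ => ?_
  have permutation_term := congrArg (MvPowerSeries.coeff r)
    (prod_C_sub_X_mul_C_mul_diagonalSeries_prod (fun i => P i (τ i)) (fun i => Q i (τ i)) f)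
  rw [coeff_diagonalSeries] at permutation_term
  simp only [Units.smul_def, smul_mul_assoc, map_zsmul, transpose_apply, Matrix.sub_apply,
    map_apply, diagonal_mul, permutation_term, MvPolynomial.coeff_smul]

end DiagonalSeries

section Determinant

variable {R ι : Type*} [CommRing R] [Fintype ι] [DecidableEq ι]

lemma coeff_det_eq_zero_of_mulVec_X {N : Matrix ι ι (MvPolynomial ι R)} {r : ι →₀ ℕ}
    (hr : r ≠ 0) (h_dvd : ∀ i, r i = 0 → MvPolynomial.X i ∣ (N *ᵥ MvPolynomial.X) i)
    (h_zero : ∀ i, r i ≠ 0 → (N *ᵥ MvPolynomial.X) i = 0) : N.det.coeff r = 0 := by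
  obtain ⟨k, hk⟩ := Finsupp.ne_iff.mp hr
  have cramer : N.det * MvPolynomial.X k =
      ∑ i, N.adjugate k i * (N *ᵥ MvPolynomial.X) i :=
    calc N.det * MvPolynomial.X k = ((N.adjugate * N) *ᵥ MvPolynomial.X) k := by
          rw [adjugate_mul, smul_mulVec, one_mulVec, Pi.smul_apply, smul_eq_mul]
      _ = ∑ i, N.adjugate k i * (N *ᵥ MvPolynomial.X) i := by
          rw [← mulVec_mulVec, mulVec, dotProduct]
  rw [← MvPolynomial.coeff_mul_X r k, cramer, MvPolynomial.coeff_sum]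
  refine Finset.sum_eq_zero fun i _ => ?_
  by_cases hi : r i = 0
  · obtain ⟨u, hu⟩ := h_dvd i hi
    have hki : k ≠ i := by
      rintro rfl
      exact hk hi
    rw [hu, mul_left_comm, MvPolynomial.coeff_X_mul', if_neg]
    simp [hi, hki.symm]
  · rw [h_zero i hi, mul_zero, MvPolynomial.coeff_zero]

lemma coeff_det_diagonal_pow_sub_eq_zero {A : Matrix ι ι R} {L : ι → MvPolynomial ι R}
    (hL : A.map MvPolynomial.C *ᵥ MvPolynomial.X = L) {r : ι →₀ ℕ} (hr : r ≠ 0) :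
    (diagonal (fun i => L i ^ r i) -
      diagonal (fun i => MvPolynomial.X i * L i ^ (r i - 1)) *
        A.map MvPolynomial.C).det.coeff r = 0 := by
  set N := diagonal (fun i => L i ^ r i) -
    diagonal (fun i => MvPolynomial.X i * L i ^ (r i - 1)) * A.map MvPolynomial.C
  have mulVec_X (i : ι) : (N *ᵥ MvPolynomial.X) i =
      MvPolynomial.X i * (L i ^ r i - L i ^ (r i - 1) * L i) := by
    rw [sub_mulVec, ← mulVec_mulVec, hL, Pi.sub_apply, mulVec_diagonal, mulVec_diagonal]
    ring
  refine coeff_det_eq_zero_of_mulVec_X hr (fun i _ => ⟨_, mulVec_X i⟩) fun i hi => ?_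
  rw [mulVec_X, pow_sub_one_mul hi, sub_self, mul_zero]

lemma constantCoeff_det_one_sub_diagonal_X_mul (B : Matrix ι ι (MvPolynomial ι R)) :
    MvPolynomial.constantCoeff (1 - diagonal MvPolynomial.X * B).det = 1 := by
  have map_diagonal_X : MvPolynomial.constantCoeff.mapMatrix
      (diagonal (MvPolynomial.X : ι → MvPolynomial ι R)) = 0 := by
    rw [RingHom.mapMatrix_apply, diagonal_map (map_zero _), diagonal_eq_zero]
    exact funext (MvPolynomial.constantCoeff_X R)
  rw [RingHom.map_det, map_sub, map_one, map_mul, map_diagonal_X, zero_mul, sub_zero, det_one]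

end Determinant

theorem macmahon_master_general {R ι : Type*} [CommRing R] [Fintype ι] [DecidableEq ι]
    (A : Matrix ι ι R) (S : MvPowerSeries ι R)
    (hS : ∀ r : ι →₀ ℕ, MvPowerSeries.coeff r S =
      (∏ i, (∑ j, MvPolynomial.C (A i j) * MvPolynomial.X j) ^ r i).coeff r) :
    (1 - diagonal MvPowerSeries.X * A.map MvPowerSeries.C).det * S = 1 := by
  set L := A.map MvPolynomial.C *ᵥ MvPolynomial.X with hL
  have S_eq : S = diagonalSeries fun r => ∏ i, L i ^ r i := MvPowerSeries.ext hS
  have det_mul_S := det_sub_diagonal_X_mul_mul_diagonalSeries_prod 1 A fun i n => L i ^ n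
  simp only [map_zero, map_one, Matrix.map_one, mul_one] at det_mul_S
  ext r
  rw [S_eq, det_mul_S, coeff_diagonalSeries, MvPowerSeries.coeff_one]
  split_ifs with hr
  · rw [hr]
    simp only [Finsupp.zero_apply, zero_tsub, pow_zero, mul_one, diagonal_one]
    exact constantCoeff_det_one_sub_diagonal_X_mul (A.map MvPolynomial.C)
  · exact coeff_det_diagonal_pow_sub_eq_zero hL.symm hr

/-!
Statement 12: the (commutative) MacMahon master theorem: with `X = diag(x₁,…,x_m)`,
the power series `S = Σ_r G(r) x^r` (where `G(r)` is the coefficient of `x^r` in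
`∏_i (a_{i1}x₁ + ⋯ + a_{im}x_m)^{r_i}`) is the inverse of `det(I − XA)` in `R[[x₁,…,x_m]]`,
i.e. `det(I − XA) · S = 1`.
-/

theorem macmahon_master (R : Type*) [CommRing R] {m : ℕ} (hm : 1 ≤ m)
    (A : Matrix (Fin m) (Fin m) R)
    (S : MvPowerSeries (Fin m) R)
    (hS : ∀ r : Fin m →₀ ℕ,
      MvPowerSeries.coeff (R := R) r S =
        MvPolynomial.coeff r
          (∏ i, (∑ j, MvPolynomial.C (A i j) * MvPolynomial.X j) ^ (r i))) :
    Matrix.det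
        (1 - Matrix.diagonal (fun i => (MvPowerSeries.X i : MvPowerSeries (Fin m) R)) *
          A.map ⇑(MvPowerSeries.C (σ := Fin m) (R := R))) * S = 1 :=
  macmahon_master_general A S hS
end

section
/- Let R be a commutative ring, m ≥ 1, A = (a_{ij}) an m×m matrix over R, and let d = (d₁,…,d_m) be an integer vector with d₁+⋯+d_m = 0. In R[[x₁,…,x_m]], let X = diag(x₁,…,x_m), and define F_A(d) = Σ G(p;r) x^p, where the sum is over all pairs of nonnegative integer vectors (p,r) with p = r + d, and G(p;r) ∈ R is the coefficient of x^r in ∏_{i=1}^m (a_{i1}x₁ + ⋯ + a_{im}x_m)^{p_i}. Let ℳ be the multiset consisting of each index i with dᵢ < 0 taken with multiplicity −dᵢ, let S(ℳ) be the set of all orderings (permutations) π = π₁π₂…π_δ of ℳ, and let N₁ ≤ N₂ ≤ ⋯ ≤ N_δ be the weakly increasing list consisting of each index i with dᵢ > 0 taken with multiplicity dᵢ (so δ is the common size). Let M and N be the sums of the elements of ℳ and of (N₁,…,N_δ) counted with multiplicity. For π ∈ S(ℳ) and 1 ≤ k ≤ δ, set I_π^k = {π₁,…,π_k} (as a set),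 let ε_π^k be the number of elements of I_π^{k−1} lying strictly between π_k and N_k, and set J_π^k = (I_π^k ∖ {π_k}) ∪ {N_k}. Then F_A(d) = (−1)^{M+N} · det(I − XA)⁻¹ · Σ_{π ∈ S(ℳ)} ∏_{k=1}^δ (−1)^{ε_π^k} · det((I − XA)^{I_π^k, J_π^k}) · det((I − XA)^{I_π^k, I_π^k})⁻¹, where for sets I, J the notation B^{I,J} means the matrix B with rows indexed by I and columns indexed by J deleted, the factors in the product over k are taken in the order k = 1,…,δ, and the inverses are taken in R[[x₁,…,x_m]] (each series det((I − XA)^{I,I}) and det(I − XA) has constant term 1, hence is invertible). -/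
/-!
Statement 13: the generalization of the MacMahon master theorem (Theorem `genmm1` of the
paper), for a commutative ring `R`: the generating function
`F_A(d) = Σ_{p = r + d} G(p;r) x^p` equals
`(−1)^{M+N} det(I−XA)⁻¹ Σ_{π ∈ S(ℳ)} ∏_{k=1}^δ (−1)^{ε_π^k} det((I−XA)^{I_π^k,J_π^k}) ·
det((I−XA)^{I_π^k,I_π^k})⁻¹`.
-/

noncomputable section

variable {R : Type*} [CommRing R] {m : ℕ}

/-- `G(p;r)`: the coefficient of `x^r` in `∏_i (a_{i1}x₁ + ⋯ + a_{im}x_m)^{p_i}`. -/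
def Gcoef (A : Matrix (Fin m) (Fin m) R) (p r : Fin m →₀ ℕ) : R :=
  MvPolynomial.coeff r
    (∏ i, (∑ j, MvPolynomial.C (A i j) * MvPolynomial.X j) ^ (p i))

/-- The matrix `I − XA` over `R[[x₁,…,x_m]]`, where `X = diag(x₁,…,x_m)`. -/
def IXA (A : Matrix (Fin m) (Fin m) R) :
    Matrix (Fin m) (Fin m) (MvPowerSeries (Fin m) R) :=
  1 - Matrix.diagonal (fun i => (MvPowerSeries.X i : MvPowerSeries (Fin m) R)) *
    A.map ⇑(MvPowerSeries.C (σ := Fin m) (R := R))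

/-- `detDel B S T`: the determinant of `B` with the rows indexed by `S` and the columns
indexed by `T` deleted (remaining rows and columns taken in increasing order); junk value `0`
if the remaining row and column sets have different sizes. -/
def detDel {α : Type*} [CommRing α] (B : Matrix (Fin m) (Fin m) α)
    (S T : Finset (Fin m)) : α :=
  if h : Sᶜ.card = Tᶜ.card then
    Matrix.det (Matrix.of fun a b : Fin (Tᶜ.card) =>
      B ((Sᶜ.orderIsoOfFin h a : Fin m)) ((Tᶜ.orderIsoOfFin rfl b : Fin m)))
  else 0

/-- The multiset `ℳ` of all `i` with `d i < 0`, each appearing `−d i` times. -/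
def negMultiset (d : Fin m → ℤ) : Multiset (Fin m) :=
  ∑ i : Fin m, Multiset.replicate (-(d i)).toNat i

/-- The multiset `𝒩` of all `i` with `d i > 0`, each appearing `d i` times. -/
def posMultiset (d : Fin m → ℤ) : Multiset (Fin m) :=
  ∑ i : Fin m, Multiset.replicate (d i).toNat i

/-!
Write `B = I - XA` and let `c ∈ ℤᵐ` have `c_i ≥ 0`. In the defining product of `F_A(c + e_i)` the
`i`-th factor has positive exponent, and splitting off one copy of it gives the row relation
`∑_j B_{ij} F_A(c + e_j) = 0`. For a vector `c` with negative part `ℳ` these relations hold in every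
row outside `ℳ`, so Cramer's rule expresses each `F_A(c + e_n)` through the `F_A(c + e_i)`, `i ∈ ℳ`.
Taking `n = N_δ` and `c = d - e_n`, this writes `F_A(d)` in terms of vectors that lack `N_δ` and one
element of `ℳ`, and induction on `δ` yields the sum over the orderings of `ℳ`. The coefficients are
entries of inverses of matrices with some rows replaced by identity rows, hence signed quotients of
minors of `B`. In the base case, replacing the `i`-th row of `A` by zero does not change
`det(I - XA) · F_A(0)`, and this product is `1` when `A = 0`.
-/

/-! ### The generating functions `F_A(d)` -/

lemma exists_natCast_or_exists_neg {ι : Type*} [Finite ι] (r : ι → ℤ) :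
    (∃ s : ι →₀ ℕ, r = fun i => (s i : ℤ)) ∨ ∃ i, r i < 0 := by
  by_cases hr : ∀ i, 0 ≤ r i
  · exact .inl ⟨Finsupp.equivFunOnFinite.symm fun i => (r i).toNat,
      funext fun i => by simp [hr i]⟩
  · exact .inr (by simpa using hr)

section genFun

variable {ι : Type*} [Fintype ι]

/-- The coefficient of `x^r` in a polynomial, for an integer exponent vector `r`; it is `0` as soon
as `r` has a negative entry. -/
def intCoeff (r : ι → ℤ) (P : MvPolynomial ι R) : R :=
  if ∀ i, 0 ≤ r i then P.coeff (Finsupp.equivFunOnFinite.symm fun i => (r i).toNat) else 0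

lemma intCoeff_natCast (r : ι →₀ ℕ) (P : MvPolynomial ι R) :
    intCoeff (fun i => (r i : ℤ)) P = P.coeff r := by
  rw [intCoeff, if_pos fun i => Int.natCast_nonneg (r i)]
  congr 1
  ext i
  simp

lemma intCoeff_of_neg {r : ι → ℤ} {i : ι} (hi : r i < 0) (P : MvPolynomial ι R) :
    intCoeff r P = 0 :=
  if_neg fun hr => (hr i).not_gt hi

lemma intCoeff_zero (r : ι → ℤ) : intCoeff r (0 : MvPolynomial ι R) = 0 := by
  simp [intCoeff]

lemma intCoeff_X_mul [DecidableEq ι] (r : ι → ℤ) (j : ι) (P : MvPolynomial ι R) :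
    intCoeff r (MvPolynomial.X j * P) = intCoeff (r - Pi.single j 1) P := by
  obtain ⟨s, rfl⟩ | ⟨i, hi⟩ := exists_natCast_or_exists_neg r
  · rw [intCoeff_natCast, MvPolynomial.coeff_X_mul']
    split_ifs with hj
    · have hsub : (fun i => (s i : ℤ)) - Pi.single j 1 =
          fun i => ((s - Finsupp.single j 1 : ι →₀ ℕ) i : ℤ) := by
        have hj : s j ≠ 0 := Finsupp.mem_support_iff.1 hj
        ext i
        rcases eq_or_ne i j with rfl | hij
        · simp only [Pi.sub_apply, Pi.single_eq_same, Finsupp.coe_tsub, Finsupp.single_eq_same]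
          omega
        · simp [hij]
      rw [hsub, intCoeff_natCast]
    · rw [intCoeff_of_neg (i := j)]
      simpa using hj
  · rw [intCoeff_of_neg hi, intCoeff_of_neg (i := i)]
    have hnonneg : 0 ≤ (Pi.single j 1 : ι → ℤ) := Pi.single_nonneg.2 zero_le_one
    exact (sub_le_self (r i) (hnonneg i)).trans_lt hi

lemma intCoeff_linearForm_mul [DecidableEq ι] (r : ι → ℤ) (a : ι → R) (P : MvPolynomial ι R) :
    intCoeff r ((∑ j, MvPolynomial.C (a j) * MvPolynomial.X j) * P) =
      ∑ j, a j * intCoeff (r - Pi.single j 1) P := by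
  simp only [← intCoeff_X_mul]
  simp only [Finset.sum_mul, mul_assoc, intCoeff, MvPolynomial.coeff_sum,
    MvPolynomial.coeff_C_mul, mul_ite, mul_zero]
  split_ifs with hr
  · rfl
  · exact Finset.sum_const_zero.symm

/-- The product `∏_i (a_{i1}x₁ + ⋯ + a_{im}x_m)^{p_i}`, whose coefficients are the `G(p;r)`. -/
def rowProduct (A : Matrix ι ι R) (p : ι →₀ ℕ) : MvPolynomial ι R :=
  ∏ i, (∑ j, MvPolynomial.C (A i j) * MvPolynomial.X j) ^ p i

lemma rowProduct_add_single (A : Matrix ι ι R) (p : ι →₀ ℕ) (i : ι) :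
    rowProduct A (p + Finsupp.single i 1) =
      (∑ j, MvPolynomial.C (A i j) * MvPolynomial.X j) * rowProduct A p := by
  simp only [rowProduct, Finsupp.add_apply, pow_add, Finset.prod_mul_distrib]
  rw [mul_comm, Fintype.prod_eq_single i fun k hk => by simp [hk]]
  simp

lemma rowProduct_eq_zero {A : Matrix ι ι R} {p : ι →₀ ℕ} {i : ι}
    (hA : A i = 0) (hp : p i ≠ 0) : rowProduct A p = 0 :=
  Finset.prod_eq_zero (Finset.mem_univ i) (by simp [hA, hp])

lemma rowProduct_updateRow [DecidableEq ι] (A : Matrix ι ι R) {p : ι →₀ ℕ} {i : ι}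
    (hp : p i = 0) (a : ι → R) : rowProduct (A.updateRow i a) p = rowProduct A p := by
  refine Finset.prod_congr rfl fun k _ => ?_
  rcases eq_or_ne k i with rfl | hk
  · simp only [hp, pow_zero]
  · simp only [Matrix.updateRow_ne hk]

/-- The generating function `F_A(d) = Σ_{p = r + d} G(p;r) x^p`. -/
def genFun (A : Matrix ι ι R) (d : ι → ℤ) : MvPowerSeries ι R :=
  fun p => intCoeff (fun i => (p i : ℤ) - d i) (rowProduct A p)

lemma coeff_genFun (A : Matrix ι ι R) (d : ι → ℤ) (p : ι →₀ ℕ) :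
    MvPowerSeries.coeff p (genFun A d) = intCoeff (fun i => (p i : ℤ) - d i) (rowProduct A p) :=
  rfl

lemma eq_genFun {A : Matrix (Fin m) (Fin m) R} {d : Fin m → ℤ} {F : MvPowerSeries (Fin m) R}
    (hF₁ : ∀ p r : Fin m →₀ ℕ, (∀ i, (p i : ℤ) = (r i : ℤ) + d i) →
      MvPowerSeries.coeff p F = Gcoef A p r)
    (hF₂ : ∀ p : Fin m →₀ ℕ, (∃ i, (p i : ℤ) < d i) → MvPowerSeries.coeff p F = 0) :
    F = genFun A d := by
  ext p
  rw [coeff_genFun]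
  obtain ⟨r, hr⟩ | ⟨i, hi⟩ := exists_natCast_or_exists_neg fun i => (p i : ℤ) - d i
  · rw [hr, intCoeff_natCast, hF₁ p r fun i => eq_add_of_sub_eq (congrFun hr i)]
    rfl
  · rw [intCoeff_of_neg (i := i) hi, hF₂ p ⟨i, sub_neg.1 hi⟩]

lemma genFun_eq_zero {A : Matrix ι ι R} {d : ι → ℤ} {i : ι}
    (hA : A i = 0) (hd : 0 < d i) : genFun A d = 0 := by
  ext p
  rw [coeff_genFun, map_zero]
  rcases eq_or_ne (p i) 0 with hp | hp
  · exact intCoeff_of_neg (i := i) (by omega) _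
  · rw [rowProduct_eq_zero hA hp, intCoeff_zero]

lemma genFun_zero_zero : genFun (0 : Matrix ι ι R) 0 = 1 := by
  classical
  ext p
  rw [coeff_genFun]
  simp only [Pi.zero_apply, sub_zero, intCoeff_natCast, MvPowerSeries.coeff_one]
  split_ifs with hp
  · simp [hp, rowProduct]
  · obtain ⟨i, hi⟩ := Finsupp.ne_iff.1 hp
    rw [rowProduct_eq_zero rfl hi, MvPolynomial.coeff_zero]

/-- Split off the monomials not divisible by `x_i`; in the others, expand one factor
`a_{i1}x₁ + ⋯ + a_{im}x_m`. -/
lemma genFun_eq_updateRow_add [DecidableEq ι] (A : Matrix ι ι R) (d : ι → ℤ) (i : ι) :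
    genFun A d = genFun (A.updateRow i 0) d + MvPowerSeries.X i *
      ∑ j, MvPowerSeries.C (A i j) * genFun A (d - Pi.single i 1 + Pi.single j 1) := by
  ext p
  rw [map_add, MvPowerSeries.X_def, MvPowerSeries.coeff_monomial_mul, one_mul, map_sum]
  simp only [MvPowerSeries.coeff_C_mul, coeff_genFun]
  rcases eq_or_ne (p i) 0 with hp | hp
  · have hle : ¬ Finsupp.single i 1 ≤ p := by simp [hp]
    rw [if_neg hle, rowProduct_updateRow A hp, add_zero]
  · have hle : Finsupp.single i 1 ≤ p := by simpa [Nat.one_le_iff_ne_zero] using hp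
    obtain ⟨q, rfl⟩ := exists_add_of_le hle
    rw [rowProduct_eq_zero Matrix.updateRow_self hp, if_pos hle, add_tsub_cancel_left,
      add_comm _ q, rowProduct_add_single, intCoeff_zero, zero_add, intCoeff_linearForm_mul]
    refine Finset.sum_congr rfl fun j _ => ?_
    congr 2
    ext k
    simp only [Pi.sub_apply, Pi.add_apply, Finsupp.add_apply, Finsupp.single_apply, Pi.single_apply]
    grind

end genFun

/-! ### MacMahon's master theorem -/

lemma IXA_apply (A : Matrix (Fin m) (Fin m) R) (i j : Fin m) :
    IXA A i j = (1 : Matrix _ _ _) i j - MvPowerSeries.X i * MvPowerSeries.C (A i j) := by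
  simp [IXA, Matrix.diagonal_mul]

lemma IXA_zero : IXA (0 : Matrix (Fin m) (Fin m) R) = 1 := by
  ext1 i j
  simp [IXA_apply]

lemma IXA_updateRow_zero (A : Matrix (Fin m) (Fin m) R) (i : Fin m) :
    IXA (A.updateRow i 0) = (IXA A).updateRow i (Pi.single i 1) := by
  ext1 k j
  rcases eq_or_ne k i with rfl | hk
  · simp [IXA_apply, Matrix.one_apply, Pi.single_apply, eq_comm]
  · simp [IXA_apply, hk]

lemma IXA_mulVec_genFun (A : Matrix (Fin m) (Fin m) R) (c : Fin m → ℤ) (i : Fin m) :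
    (IXA A).mulVec (fun j => genFun A (c + Pi.single j 1)) i =
      genFun (A.updateRow i 0) (c + Pi.single i 1) := by
  have hrec := genFun_eq_updateRow_add A (c + Pi.single i 1) i
  simp only [add_sub_cancel_right] at hrec
  simp only [Matrix.mulVec, dotProduct, IXA_apply, sub_mul, Finset.sum_sub_distrib, mul_assoc,
    ← Finset.mul_sum]
  rw [sub_eq_iff_eq_add, ← hrec]
  simp [Matrix.one_apply]

lemma IXA_mulVec_genFun_eq_zero (A : Matrix (Fin m) (Fin m) R) {c : Fin m → ℤ} {i : Fin m}
    (hc : 0 ≤ c i) : (IXA A).mulVec (fun j => genFun A (c + Pi.single j 1)) i = 0 := by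
  rw [IXA_mulVec_genFun]
  refine genFun_eq_zero Matrix.updateRow_self ?_
  simp only [Pi.add_apply, Pi.single_eq_same]
  omega

/-- `I - XA` maps the vector `j ↦ F_A(e_j - e_i)` to a multiple of `e_i`; compare the `i`-th
entries after multiplying by the adjugate. -/
lemma det_IXA_mul_genFun_zero_eq_updateRow (A : Matrix (Fin m) (Fin m) R) (i : Fin m) :
    (IXA A).det * genFun A 0 = (IXA (A.updateRow i 0)).det * genFun (A.updateRow i 0) 0 := by
  have hv : (IXA A).mulVec (fun j => genFun A (-Pi.single i 1 + Pi.single j 1)) =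
      Pi.single i (genFun (A.updateRow i 0) 0) := by
    ext1 k
    rcases eq_or_ne k i with rfl | hk
    · rw [IXA_mulVec_genFun, neg_add_cancel, Pi.single_eq_same]
    · rw [IXA_mulVec_genFun_eq_zero A (by simp [hk]), Pi.single_eq_of_ne hk]
  have hi := congrFun (congrArg (IXA A).adjugate.mulVec hv) i
  rw [Matrix.mulVec_mulVec, Matrix.adjugate_mul, Matrix.smul_mulVec, Matrix.one_mulVec,
    Pi.smul_apply, smul_eq_mul, neg_add_cancel, Matrix.mulVec_single, Pi.smul_apply,
    op_smul_eq_mul, Matrix.col_apply, Matrix.adjugate_apply] at hi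
  rw [hi, IXA_updateRow_zero]

theorem det_IXA_mul_genFun_zero (A : Matrix (Fin m) (Fin m) R) :
    (IXA A).det * genFun A 0 = 1 := by
  suffices h : ∀ (T : Finset (Fin m)) (A : Matrix (Fin m) (Fin m) R), (∀ i ∉ T, A i = 0) →
      (IXA A).det * genFun A 0 = 1 from h Finset.univ A (by simp)
  intro T
  induction T using Finset.induction_on with
  | empty =>
    intro A hA
    obtain rfl : A = 0 := funext fun i => hA i (Finset.notMem_empty i)
    rw [IXA_zero, genFun_zero_zero, Matrix.det_one, one_mul]
  | insert i T _ ih =>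
    intro A hA
    rw [det_IXA_mul_genFun_zero_eq_updateRow A i]
    refine ih _ fun k hk => ?_
    rcases eq_or_ne k i with rfl | hki
    · exact Matrix.updateRow_self
    · rw [Matrix.updateRow_ne hki, hA k (by simp [hki, hk])]

/-! ### Matrices with some rows replaced by identity rows -/

section identityRows

variable {ι α : Type*} [DecidableEq ι] [CommRing α]

/-- The matrix `B` with the rows indexed by `T` replaced by the rows of the identity matrix. Its
determinant is that of `B` with the rows and columns in `T` deleted. -/
def identityRows (B : Matrix ι ι α) (T : Finset ι) : Matrix ι ι α :=
  Matrix.of fun i => if i ∈ T then Pi.single i 1 else B i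

lemma identityRows_of_mem (B : Matrix ι ι α) {T : Finset ι} {i : ι} (hi : i ∈ T) :
    identityRows B T i = Pi.single i 1 :=
  if_pos hi

lemma identityRows_of_notMem (B : Matrix ι ι α) {T : Finset ι} {i : ι} (hi : i ∉ T) :
    identityRows B T i = B i :=
  if_neg hi

lemma eq_sum_inv_identityRows_mul [Fintype ι] {B : Matrix ι ι α} {T : Finset ι}
    (hT : IsUnit (identityRows B T).det) {v : ι → α} (hv : ∀ k ∉ T, B.mulVec v k = 0) (n : ι) :
    v n = ∑ i ∈ T, (identityRows B T)⁻¹ n i * v i := by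
  have hmul : (identityRows B T).mulVec v = fun k => if k ∈ T then v k else 0 := by
    ext1 k
    split_ifs with hk
    · rw [Matrix.mulVec, identityRows_of_mem B hk, single_one_dotProduct]
    · rw [Matrix.mulVec, identityRows_of_notMem B hk]
      exact hv k hk
  calc v n = (identityRows B T)⁻¹.mulVec ((identityRows B T).mulVec v) n := by
        rw [Matrix.mulVec_mulVec, Matrix.nonsing_inv_mul _ hT, Matrix.one_mulVec]
    _ = ∑ i ∈ T, (identityRows B T)⁻¹ n i * v i := by
        rw [hmul]
        simp [Matrix.mulVec, dotProduct]

end identityRows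

lemma identityRows_IXA (A : Matrix (Fin m) (Fin m) R) (T : Finset (Fin m)) :
    identityRows (IXA A) T = IXA (Matrix.of fun i => if i ∈ T then 0 else A i) := by
  ext1 i j
  by_cases hi : i ∈ T
  · simp [identityRows_of_mem _ hi, IXA_apply, hi, Matrix.one_apply, Pi.single_apply, eq_comm]
  · simp [identityRows_of_notMem _ hi, IXA_apply, hi]

lemma isUnit_det_identityRows_IXA (A : Matrix (Fin m) (Fin m) R) (T : Finset (Fin m)) :
    IsUnit (identityRows (IXA A) T).det := by
  rw [identityRows_IXA]
  exact .of_mul_eq_one _ (det_IXA_mul_genFun_zero _)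

/-! ### Sums over the orderings of a multiset -/

section orderings

variable {ι α : Type*} [DecidableEq ι]

/-- The set `S(s)` of all orderings of the multiset `s`. -/
def orderings (s : Multiset ι) : Finset (List ι) :=
  s.lists.toFinset

lemma mem_orderings {s : Multiset ι} {l : List ι} :
    l ∈ orderings s ↔ (l : Multiset ι) = s := by
  rw [orderings, Multiset.mem_toFinset, Multiset.mem_lists_iff, eq_comm]
  rfl

lemma coe_orderings (s : Multiset ι) :
    (orderings s : Set (List ι)) = {l : List ι | (l : Multiset ι) = s} :=
  Set.ext fun _ => mem_orderings

lemma orderings_zero : orderings (0 : Multiset ι) = {[]} := by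
  ext l
  rw [mem_orderings, Multiset.coe_eq_zero, Finset.mem_singleton]

lemma append_singleton_mem_orderings {s : Multiset ι} {l : List ι} {i : ι} :
    l ++ [i] ∈ orderings s ↔ i ∈ s ∧ l ∈ orderings (s.erase i) := by
  rw [mem_orderings, mem_orderings, ← Multiset.coe_add, Multiset.coe_singleton, add_comm,
    Multiset.singleton_add]
  constructor
  · rintro rfl
    simp
  · rintro ⟨hi, hl⟩
    rw [hl, Multiset.cons_erase hi]

lemma sum_orderings_eq_sum_append [AddCommMonoid α] {s : Multiset ι} (hs : s ≠ 0)
    (f : List ι → α) :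
    ∑ l ∈ orderings s, f l = ∑ i ∈ s.toFinset, ∑ l ∈ orderings (s.erase i), f (l ++ [i]) := by
  rw [Finset.sum_sigma']
  symm
  refine Finset.sum_bij (fun x _ => x.2 ++ [x.1]) ?_ ?_ ?_ fun _ _ => rfl
  · rintro ⟨i, l⟩ hil
    rw [Finset.mem_sigma, Multiset.mem_toFinset] at hil
    exact append_singleton_mem_orderings.2 hil
  · rintro ⟨i, l⟩ _ ⟨i', l'⟩ _ h
    obtain ⟨rfl, rfl⟩ : l = l' ∧ i = i' := by simpa using h
    rfl
  · intro l hl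
    rcases List.eq_nil_or_concat' l with rfl | ⟨l, i, rfl⟩
    · exact absurd (mem_orderings.1 hl).symm hs
    · exact ⟨⟨i, l⟩, by simpa using append_singleton_mem_orderings.1 hl, rfl⟩

/-- The vector whose `i`-th entry is the multiplicity of `i` in `t` minus that in `s`. It encodes
the integer vector `d` by the multisets `t = 𝒩` and `s = ℳ`. -/
def countDiff (t s : Multiset ι) : ι → ℤ :=
  fun i => t.count i - s.count i

lemma countDiff_append_singleton (N : List ι) (n : ι) (s : Multiset ι) :
    countDiff ↑(N ++ [n]) s = countDiff N s + Pi.single n 1 := by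
  ext i
  simp only [countDiff, Multiset.coe_count, List.count_append, List.count_singleton',
    Pi.add_apply, Pi.single_apply]
  grind

lemma countDiff_erase (t : Multiset ι) {s : Multiset ι} {i : ι} (hi : i ∈ s) :
    countDiff t (s.erase i) = countDiff t s + Pi.single i 1 := by
  ext j
  have hcount := Multiset.count_pos.2 hi
  rcases eq_or_ne j i with rfl | hj
  · simp only [countDiff, Multiset.count_erase_self, Pi.add_apply, Pi.single_eq_same]
    omega
  · simp [countDiff, hj]

lemma countDiff_self (s : Multiset ι) : countDiff s s = 0 :=
  funext fun _ => sub_self _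

variable [Fintype ι] [CommRing α]

/-- The weight of an ordering `l = π₁…π_δ` relative to `N = N₁…N_δ`: the product over `k` of the
`(N_k, π_k)` entries of the inverses of `B` with the rows in `{π₁,…,π_k}` made identity rows. The
default value `z` is never reached when `l` has at least the length of `N`. -/
def orderingWeight (B : Matrix ι ι α) (z : ι) (N l : List ι) : α :=
  ∏ k ∈ Finset.range N.length,
    (identityRows B (l.take (k + 1)).toFinset)⁻¹ (N.getD k z) (l.getD k z)

lemma orderingWeight_append_singleton (B : Matrix ι ι α) (z n i : ι) {N l : List ι}
    (hlen : l.length = N.length) :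
    orderingWeight B z (N ++ [n]) (l ++ [i]) =
      (identityRows B (l ++ [i]).toFinset)⁻¹ n i * orderingWeight B z N l := by
  rw [orderingWeight, List.length_append, List.length_singleton, Finset.prod_range_succ, mul_comm]
  congr 1
  · rw [List.take_of_length_le (by simp [hlen]), List.getD_append_right _ _ _ _ le_rfl,
      List.getD_append_right _ _ _ _ hlen.le, hlen, Nat.sub_self]
    rfl
  · refine Finset.prod_congr rfl fun k hk => ?_
    have hkN : k < N.length := Finset.mem_range.1 hk
    rw [List.take_append_of_le_length (by omega), List.getD_append _ _ _ _ hkN,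
      List.getD_append _ _ _ _ (by omega)]

/-- Cramer's rule for the rows outside `s`, on which the hypothesis makes `B` annihilate the vector
`j ↦ F (N - s + e_j)`. -/
lemma apply_countDiff_append_singleton {B : Matrix ι ι α} {F : (ι → ℤ) → α} (s : Multiset ι)
    (hB : IsUnit (identityRows B s.toFinset).det)
    (hF : ∀ (c : ι → ℤ) (i : ι), 0 ≤ c i → B.mulVec (fun j => F (c + Pi.single j 1)) i = 0)
    (N : List ι) (n : ι) :
    F (countDiff ↑(N ++ [n]) s) = ∑ i ∈ s.toFinset,
      (identityRows B s.toFinset)⁻¹ n i * F (countDiff N (s.erase i)) := by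
  have hzero : ∀ k ∉ s.toFinset,
      B.mulVec (fun j => F (countDiff N s + Pi.single j 1)) k = 0 := by
    intro k hk
    have hcount : s.count k = 0 := by simpa using hk
    exact hF _ k (by simp [countDiff, hcount])
  rw [countDiff_append_singleton, eq_sum_inv_identityRows_mul hB hzero n]
  refine Finset.sum_congr rfl fun i hi => ?_
  rw [countDiff_erase _ (Multiset.mem_toFinset.1 hi)]

theorem apply_countDiff_eq_mul_sum_orderingWeight {B : Matrix ι ι α} {F : (ι → ℤ) → α}
    (hB : ∀ T, IsUnit (identityRows B T).det)
    (hF : ∀ (c : ι → ℤ) (i : ι), 0 ≤ c i → B.mulVec (fun j => F (c + Pi.single j 1)) i = 0)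
    (z : ι) (N : List ι) (s : Multiset ι) (hs : s.card = N.length) :
    F (countDiff N s) = F 0 * ∑ l ∈ orderings s, orderingWeight B z N l := by
  induction N using List.reverseRecOn generalizing s with
  | nil =>
    obtain rfl : s = 0 := Multiset.card_eq_zero.1 hs
    simp [orderings_zero, orderingWeight, countDiff_self]
  | append_singleton N n ih =>
    have hs0 : s ≠ 0 := by
      rintro rfl
      simp at hs
    rw [apply_countDiff_append_singleton s (hB _) hF, sum_orderings_eq_sum_append hs0,
      Finset.mul_sum]
    refine Finset.sum_congr rfl fun i hi => ?_
    rw [Multiset.mem_toFinset] at hi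
    have hcard : (s.erase i).card = N.length := by
      rw [Multiset.card_erase_of_mem hi, hs]
      simp
    rw [ih _ hcard, mul_left_comm, Finset.mul_sum]
    congr 1
    refine Finset.sum_congr rfl fun l hl => ?_
    have hlen : l.length = N.length := by rw [← hcard, ← mem_orderings.1 hl, Multiset.coe_card]
    have hset : (l ++ [i]).toFinset = s.toFinset := by
      rw [← mem_orderings.1 (append_singleton_mem_orderings.2 ⟨hi, hl⟩)]
      rfl
    rw [orderingWeight_append_singleton B z n i hlen, hset]

end orderings

lemma sum_range_getD {ι M : Type*} [AddCommMonoid M] (l : List ι) (z : ι) (f : ι → M) :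
    ∑ k ∈ Finset.range l.length, f (l.getD k z) = (l.map f).sum := by
  rw [Finset.sum_range, ← Fin.sum_univ_fun_getElem]
  simp

/-! ### Inverse entries as quotients of minors -/

section minors

variable {α : Type*} [CommRing α]

lemma det_eq_neg_one_pow_mul_det_of_succAbove {k : ℕ}
    {M N : Matrix (Fin (k + 1)) (Fin (k + 1)) α} {p q : Fin (k + 1)}
    (hpq : ∀ a, M a p = N a q) (hne : ∀ a b, M a (p.succAbove b) = N a (q.succAbove b)) :
    M.det = (-1) ^ (p + q : ℕ) * N.det := by
  rw [Matrix.det_succ_column M p, Matrix.det_succ_column N q, Finset.mul_sum]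
  refine Finset.sum_congr rfl fun a _ => ?_
  have hminor : M.submatrix a.succAbove p.succAbove = N.submatrix a.succAbove q.succAbove :=
    Matrix.ext fun _ _ => hne _ _
  have hsign : (-1 : α) ^ (a + p : ℕ) = (-1) ^ (p + q : ℕ) * (-1) ^ (a + q : ℕ) := by
    rw [← pow_add]
    exact neg_one_pow_congr (by grind)
  rw [hminor, hpq, hsign]
  ring

lemma exists_orderEmbOfFin_succAbove {β : Type*} [LinearOrder β] {U : Finset β} {x : β} {k : ℕ}
    (hx : x ∈ U) (hU : U.card = k + 1) (hUx : (U.erase x).card = k) :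
    ∃ p : Fin (k + 1), (p : ℕ) = (U.filter (· < x)).card ∧ U.orderEmbOfFin hU p = x ∧
      ∀ a, U.orderEmbOfFin hU (p.succAbove a) = (U.erase x).orderEmbOfFin hUx a := by
  obtain ⟨p, rfl⟩ : x ∈ Set.range (U.orderEmbOfFin hU) := by
    rwa [Finset.range_orderEmbOfFin]
  have hbelow : U.filter (· < U.orderEmbOfFin hU p) =
      (Finset.Iio p).map (U.orderEmbOfFin hU).toEmbedding := by
    ext y
    rw [Finset.mem_filter, Finset.mem_map, ← Finset.mem_coe, ← Finset.range_orderEmbOfFin U hU]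
    constructor
    · rintro ⟨⟨a, rfl⟩, ha⟩
      exact ⟨a, Finset.mem_Iio.2 ((U.orderEmbOfFin hU).lt_iff_lt.1 ha), rfl⟩
    · rintro ⟨a, ha, rfl⟩
      exact ⟨⟨a, rfl⟩, (U.orderEmbOfFin hU).lt_iff_lt.2 (Finset.mem_Iio.1 ha)⟩
  refine ⟨p, by rw [hbelow, Finset.card_map, Fin.card_Iio], rfl, fun a => ?_⟩
  refine congrFun (Finset.orderEmbOfFin_unique hUx
    (f := fun a => U.orderEmbOfFin hU (p.succAbove a)) (fun b => ?_) ?_) a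
  · exact Finset.mem_erase.2 ⟨fun h => Fin.succAbove_ne p b ((U.orderEmbOfFin hU).injective h),
      Finset.orderEmbOfFin_mem _ _ _⟩
  · exact (U.orderEmbOfFin hU).strictMono.comp (Fin.strictMono_succAbove p)

/-- The number of elements of `T` strictly between `i` and `n`. With `T = I_π^{k-1}`, `i = π_k` and
`n = N_k` this is `ε_π^k`. -/
def numBetween {β : Type*} [LinearOrder β] (T : Finset β) (i n : β) : ℕ :=
  (T.filter fun x => i ⊓ n < x ∧ x < i ⊔ n).card

lemma numBetween_comm {β : Type*} [LinearOrder β] (T : Finset β) (i n : β) :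
    numBetween T i n = numBetween T n i := by
  rw [numBetween, inf_comm, sup_comm, numBetween]

lemma numBetween_insert_left {β : Type*} [LinearOrder β] (T : Finset β) (i n : β) :
    numBetween (insert i T) i n = numBetween T i n := by
  have hi : ¬ (i ⊓ n < i ∧ i < i ⊔ n) := by
    rcases le_total i n with h | h <;> simp [h]
  rw [numBetween, Finset.filter_insert, if_neg hi, numBetween]

lemma card_filter_lt_insert {β : Type*} [LinearOrder β] {T : Finset β} {a b : β} (hab : a < b)
    (ha : a ∉ T) :
    ((insert a T).filter (· < b)).card = (T.filter (· < a)).card + numBetween T a b + 1 := by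
  have hbelow : (T.filter (· < b)).filter (· < a) = T.filter (· < a) := by grind
  have hbetween : (T.filter (· < b)).filter (¬ · < a) = T.filter fun x => a < x ∧ x < b := by grind
  rw [Finset.filter_insert, if_pos hab, Finset.card_insert_of_notMem (by simp [ha]),
    ← Finset.card_filter_add_card_filter_not (s := T.filter (· < b)) (· < a), hbelow, hbetween,
    numBetween, inf_eq_left.2 hab.le, sup_eq_right.2 hab.le]

lemma card_filter_lt_insert_of_lt {β : Type*} [LinearOrder β] (T : Finset β) {a b : β}
    (hab : a < b) : ((insert b T).filter (· < a)).card = (T.filter (· < a)).card := by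
  rw [Finset.filter_insert, if_neg hab.asymm]

lemma card_filter_lt_add_compl (T : Finset (Fin m)) (x : Fin m) :
    (T.filter (· < x)).card + (Tᶜ.filter (· < x)).card = x := by
  rw [← Finset.card_union_of_disjoint (Finset.disjoint_filter_filter disjoint_compl_right),
    ← Finset.filter_union, Finset.union_compl, Finset.filter_gt_eq_Iio, Fin.card_Iio]

lemma even_card_filter_lt_compl_add {T : Finset (Fin m)} {i n : Fin m} (hi : i ∈ T) (hn : n ∉ T) :
    Even ((Tᶜ.filter (· < n)).card + ((insert n (T.erase i))ᶜ.filter (· < i)).card +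
      (i + n + numBetween T i n + 1)) := by
  have hin : i ≠ n := ne_of_mem_of_not_mem hi hn
  have hbelow_n := card_filter_lt_add_compl T n
  have hbelow_i := card_filter_lt_add_compl (insert n (T.erase i)) i
  obtain ⟨U, hiU, rfl⟩ : ∃ U, i ∉ U ∧ insert i U = T :=
    ⟨T.erase i, Finset.notMem_erase i T, Finset.insert_erase hi⟩
  have hnU : n ∉ U := fun h => hn (Finset.mem_insert_of_mem h)
  rw [Finset.erase_insert hiU] at hbelow_i ⊢
  rw [numBetween_insert_left]
  rcases lt_or_gt_of_ne hin with h | h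
  · have hleft := card_filter_lt_insert h hiU
    have hright := card_filter_lt_insert_of_lt U h
    grind
  · have hleft := card_filter_lt_insert h hnU
    have hright := card_filter_lt_insert_of_lt U h
    rw [numBetween_comm] at hleft
    grind

lemma detDel_eq_det (B : Matrix (Fin m) (Fin m) α) (S T : Finset (Fin m)) {k : ℕ}
    (hS : Sᶜ.card = k) (hT : Tᶜ.card = k) :
    detDel B S T = (B.submatrix (Sᶜ.orderEmbOfFin hS) (Tᶜ.orderEmbOfFin hT)).det := by
  subst hT
  rw [detDel, dif_pos hS]
  rfl

lemma detDel_eq_zero (B : Matrix (Fin m) (Fin m) α) {S T : Finset (Fin m)}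
    (hST : Sᶜ.card ≠ Tᶜ.card) : detDel B S T = 0 :=
  dif_neg hST

lemma detDel_self (B : Matrix (Fin m) (Fin m) α) (T : Finset (Fin m)) :
    detDel B T T = (identityRows B T).det := by
  have hzero : ∀ i, ¬ i ∉ T → ∀ j, j ∉ T → identityRows B T i j = 0 := by
    intro i hi j hj
    rw [identityRows_of_mem B (not_not.1 hi),
      Pi.single_eq_of_ne (ne_of_mem_of_not_mem (not_not.1 hi) hj).symm]
  have hone : (identityRows B T).toSquareBlockProp (¬ · ∉ T) = 1 := by
    ext i j
    rw [Matrix.toSquareBlockProp, Matrix.toBlock_apply, identityRows_of_mem B (not_not.1 i.2),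
      Matrix.one_eq_pi_single, Pi.single_apply, Pi.single_apply]
    simp only [Subtype.ext_iff]
  let e : Fin Tᶜ.card ≃ {i : Fin m // i ∉ T} :=
    (Tᶜ.orderIsoOfFin rfl).toEquiv.trans (Equiv.subtypeEquivRight fun _ => Finset.mem_compl)
  rw [Matrix.twoBlockTriangular_det _ (· ∉ T) hzero, hone, Matrix.det_one, mul_one,
    ← Matrix.det_submatrix_equiv_self e, detDel_eq_det B T T rfl rfl]
  congr 1
  ext a b
  have ha : Tᶜ.orderEmbOfFin rfl a ∉ T := Finset.mem_compl.1 (Finset.orderEmbOfFin_mem _ _ _)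
  exact (congrFun (identityRows_of_notMem B ha) _).symm

lemma detDel_submatrix_swap (B : Matrix (Fin m) (Fin m) α) (S : Finset (Fin m))
    {T : Finset (Fin m)} {i n : Fin m} (hi : i ∈ T) (hn : n ∉ T) :
    detDel (B.submatrix id (Equiv.swap i n)) S T =
      (-1) ^ (i + n + numBetween T i n + 1 : ℕ) * detDel B S (insert n (T.erase i)) := by
  set V := insert n (T.erase i) with hV
  have hnT : n ∈ Tᶜ := Finset.mem_compl.2 hn
  have hiV : i ∈ Vᶜ := by
    have hin : i ≠ n := ne_of_mem_of_not_mem hi hn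
    simp [hV, hin]
  have herase : Vᶜ.erase i = Tᶜ.erase n := by
    ext x
    simp only [hV, Finset.mem_erase, Finset.mem_compl, Finset.mem_insert]
    grind
  obtain ⟨k, hk⟩ : ∃ k, (Tᶜ.erase n).card = k := ⟨_, rfl⟩
  have hTk : Tᶜ.card = k + 1 := by rw [← hk, Finset.card_erase_add_one hnT]
  have hVk : Vᶜ.card = k + 1 := by rw [← hk, ← herase, Finset.card_erase_add_one hiV]
  by_cases hSk : Sᶜ.card = k + 1
  · obtain ⟨p, hp, hpn, hp_ne⟩ := exists_orderEmbOfFin_succAbove hnT hTk hk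
    obtain ⟨q, hq, hqi, hq_ne⟩ := exists_orderEmbOfFin_succAbove hiV hVk (herase ▸ hk)
    rw [detDel_eq_det _ S T hSk hTk, detDel_eq_det B S V hSk hVk,
      det_eq_neg_one_pow_mul_det_of_succAbove (p := p) (q := q)
        (N := B.submatrix (Sᶜ.orderEmbOfFin hSk) (Vᶜ.orderEmbOfFin hVk))]
    · congr 1
      have heven := even_card_filter_lt_compl_add hi hn
      rw [← hp, ← hV, ← hq] at heven
      exact neg_one_pow_congr (by grind)
    · intro a
      simp [hpn, hqi]
    · intro a b
      have hb := Finset.orderEmbOfFin_mem _ hk b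
      have hbn : (Tᶜ.erase n).orderEmbOfFin hk b ≠ n := Finset.ne_of_mem_erase hb
      have hbi : (Tᶜ.erase n).orderEmbOfFin hk b ≠ i := by
        intro h
        rw [h] at hb
        simp [hi] at hb
      simp [hp_ne, hq_ne, herase, Equiv.swap_apply_of_ne_of_ne hbi hbn]
  · rw [detDel_eq_zero _ (hTk ▸ hSk), detDel_eq_zero _ (hVk ▸ hSk), mul_zero]

lemma updateRow_identityRows_submatrix_swap {ι : Type*} [DecidableEq ι] (B : Matrix ι ι α)
    {T : Finset ι} {i n : ι} (hi : i ∈ T) (hn : n ∉ T) :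
    ((identityRows B T).updateRow i (Pi.single n 1)).submatrix id (Equiv.swap i n) =
      identityRows (B.submatrix id (Equiv.swap i n)) T := by
  ext a b
  rw [Matrix.submatrix_apply, id]
  by_cases ha : a ∈ T
  · rw [identityRows_of_mem _ ha]
    rcases eq_or_ne a i with rfl | hai
    · simp only [Matrix.updateRow_self, Pi.single_apply, Equiv.swap_apply_eq_iff,
        Equiv.swap_apply_right]
    · have han : a ≠ n := ne_of_mem_of_not_mem ha hn
      simp only [Matrix.updateRow_ne hai, identityRows_of_mem _ ha, Pi.single_apply,
        Equiv.swap_apply_eq_iff, Equiv.swap_apply_of_ne_of_ne hai han]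
  · have hai : a ≠ i := (ne_of_mem_of_not_mem hi ha).symm
    rw [Matrix.updateRow_ne hai, identityRows_of_notMem _ ha, identityRows_of_notMem _ ha]
    rfl

lemma adjugate_identityRows_apply (B : Matrix (Fin m) (Fin m) α) {T : Finset (Fin m)} {i n : Fin m}
    (hi : i ∈ T) (hn : n ∉ T) :
    (identityRows B T).adjugate n i =
      (-1) ^ (i + n + numBetween T i n : ℕ) * detDel B T (insert n (T.erase i)) := by
  have hin : i ≠ n := ne_of_mem_of_not_mem hi hn
  have hswap := Matrix.det_permute' (Equiv.swap i n)
    ((identityRows B T).updateRow i (Pi.single n 1))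
  rw [updateRow_identityRows_submatrix_swap B hi hn, ← detDel_self,
    detDel_submatrix_swap B T hi hn, Equiv.Perm.sign_swap hin] at hswap
  rw [Matrix.adjugate_apply]
  push_cast at hswap
  linear_combination hswap

lemma inv_identityRows_apply (B : Matrix (Fin m) (Fin m) α) {T : Finset (Fin m)} {i n : Fin m}
    (hi : i ∈ T) (hn : n ∉ T) :
    (identityRows B T)⁻¹ n i = (-1) ^ (i + n : ℕ) *
      ((-1) ^ numBetween T i n * detDel B T (insert n (T.erase i)) *
        Ring.inverse (detDel B T T)) := by
  rw [Matrix.inv_def, Matrix.smul_apply, smul_eq_mul, adjugate_identityRows_apply B hi hn,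
    detDel_self]
  ring

end minors

/-! ### The generalized master theorem -/

lemma count_negMultiset (d : Fin m → ℤ) (i : Fin m) : (negMultiset d).count i = (-(d i)).toNat := by
  simp [negMultiset, Multiset.count_sum', Multiset.count_replicate]

lemma count_posMultiset (d : Fin m → ℤ) (i : Fin m) : (posMultiset d).count i = (d i).toNat := by
  simp [posMultiset, Multiset.count_sum', Multiset.count_replicate]

lemma countDiff_posMultiset_negMultiset (d : Fin m → ℤ) :
    countDiff (posMultiset d) (negMultiset d) = d := by
  ext i
  rw [countDiff, count_posMultiset, count_negMultiset]
  omega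

lemma card_negMultiset_eq_card_posMultiset {d : Fin m → ℤ} (hd : ∑ i, d i = 0) :
    (negMultiset d).card = (posMultiset d).card := by
  have hdiff : ((posMultiset d).card : ℤ) - (negMultiset d).card = ∑ i, d i := by
    simp [posMultiset, negMultiset, ← Finset.sum_sub_distrib]
  omega

lemma disjoint_negMultiset_posMultiset (d : Fin m → ℤ) :
    Disjoint (negMultiset d) (posMultiset d) := by
  rw [Multiset.disjoint_left]
  intro i hi hi'
  rw [← Multiset.count_pos, count_negMultiset] at hi
  rw [← Multiset.count_pos, count_posMultiset] at hi'
  omega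

lemma orderingWeight_eq_neg_one_pow_mul_prod {α : Type*} [CommRing α]
    (B : Matrix (Fin m) (Fin m) α) (z : Fin m) {N l : List (Fin m)}
    (hlen : l.length = N.length) (hlN : l.Disjoint N) :
    orderingWeight B z N l =
      (-1) ^ ((l.map fun i : Fin m => (i : ℕ) + 1).sum +
          (N.map fun i : Fin m => (i : ℕ) + 1).sum) *
        ∏ k ∈ Finset.range N.length,
          ((-1) ^ numBetween (l.take k).toFinset (l.getD k z) (N.getD k z) *
            detDel B (l.take (k + 1)).toFinset
              (insert (N.getD k z) ((l.take (k + 1)).toFinset.erase (l.getD k z))) *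
            Ring.inverse (detDel B (l.take (k + 1)).toFinset (l.take (k + 1)).toFinset)) := by
  rw [← sum_range_getD l z, ← sum_range_getD N z, hlen, ← Finset.sum_add_distrib,
    ← Finset.prod_pow_eq_pow_sum, ← Finset.prod_mul_distrib]
  refine Finset.prod_congr rfl fun k hk => ?_
  have hkN : k < N.length := Finset.mem_range.1 hk
  have hkl : k < l.length := hlen ▸ hkN
  have htake : (l.take (k + 1)).toFinset = insert (l.getD k z) (l.take k).toFinset := by
    rw [List.take_add_one, List.getElem?_eq_getElem hkl, List.getD_eq_getElem _ _ hkl,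
      List.toFinset_append, Finset.union_comm]
    rfl
  have hmem : l.getD k z ∈ (l.take (k + 1)).toFinset := htake ▸ Finset.mem_insert_self _ _
  have hnotMem : N.getD k z ∉ (l.take (k + 1)).toFinset := by
    rw [List.mem_toFinset, List.getD_eq_getElem _ _ hkN]
    exact fun h => hlN (List.mem_of_mem_take h) (List.getElem_mem hkN)
  have hsign : (-1 : α) ^ ((l.getD k z : ℕ) + 1 + (N.getD k z + 1)) =
      (-1) ^ (l.getD k z + N.getD k z : ℕ) :=
    neg_one_pow_congr (by grind)
  have hbetween : numBetween (l.take (k + 1)).toFinset (l.getD k z) (N.getD k z) =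
      numBetween (l.take k).toFinset (l.getD k z) (N.getD k z) := by
    rw [htake, numBetween_insert_left]
  rw [inv_identityRows_apply B hmem hnotMem, hsign, hbetween]

/-- Without a type for `i`, the map on the left is taken over the coercion of `s` to `Multiset ℕ`.
The exponents in the theorem have this form. -/
lemma sum_map_coe_add_one (s : Multiset (Fin m)) :
    (s.map fun i => (i : ℕ) + 1).sum = (s.map fun i : Fin m => (i : ℕ) + 1).sum := by
  simp

lemma genFun_zero_eq_inverse_det (A : Matrix (Fin m) (Fin m) R) :
    genFun A 0 = Ring.inverse (IXA A).det := by
  rw [← mul_one (Ring.inverse _), eq_comm, Ring.inverse_mul_eq_iff_eq_mul _ _ _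
    (.of_mul_eq_one _ (det_IXA_mul_genFun_zero A)), det_IXA_mul_genFun_zero]

theorem generalized_macmahon_general (hm : 1 ≤ m)
    (A : Matrix (Fin m) (Fin m) R)
    (d : Fin m → ℤ) (hd : ∑ i, d i = 0)
    (F : MvPowerSeries (Fin m) R)
    (hF₁ : ∀ p r : Fin m →₀ ℕ, (∀ i, (p i : ℤ) = (r i : ℤ) + d i) →
      MvPowerSeries.coeff p F = Gcoef A p r)
    (hF₂ : ∀ p : Fin m →₀ ℕ, (∃ i, (p i : ℤ) < d i) →
      MvPowerSeries.coeff p F = 0)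
    (NL : List (Fin m))
    (hNL' : (NL : Multiset (Fin m)) = posMultiset d) :
    F = (-1 : MvPowerSeries (Fin m) R) ^
          ((((negMultiset d).map fun i => (i : ℕ) + 1).sum +
            ((posMultiset d).map fun i => (i : ℕ) + 1).sum)) *
        Ring.inverse (IXA A).det *
        ∑ᶠ l ∈ {l : List (Fin m) | (l : Multiset (Fin m)) = negMultiset d},
          ∏ k ∈ Finset.range (Multiset.card (negMultiset d)),
            ((-1 : MvPowerSeries (Fin m) R) ^
                (((l.take k).toFinset.filter fun x =>
                    (l.getD k ⟨0, hm⟩) ⊓ (NL.getD k ⟨0, hm⟩) < x ∧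
                      x < (l.getD k ⟨0, hm⟩) ⊔ (NL.getD k ⟨0, hm⟩)).card) *
              detDel (IXA A) ((l.take (k + 1)).toFinset)
                (insert (NL.getD k ⟨0, hm⟩)
                  (((l.take (k + 1)).toFinset).erase (l.getD k ⟨0, hm⟩))) *
              Ring.inverse
                (detDel (IXA A) ((l.take (k + 1)).toFinset) ((l.take (k + 1)).toFinset))) := by
  have hcard : (negMultiset d).card = NL.length := by
    rw [card_negMultiset_eq_card_posMultiset hd, ← hNL', Multiset.coe_card]
  have hexpand := apply_countDiff_eq_mul_sum_orderingWeight (isUnit_det_identityRows_IXA A)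
    (fun _ _ hc => IXA_mulVec_genFun_eq_zero A hc) ⟨0, hm⟩ NL _ hcard
  rw [hNL', countDiff_posMultiset_negMultiset, genFun_zero_eq_inverse_det] at hexpand
  rw [eq_genFun hF₁ hF₂, hexpand, ← coe_orderings, finsum_mem_coe_finset, mul_comm (_ ^ _),
    mul_assoc, Finset.mul_sum (a := _ ^ _)]
  congr 1
  refine Finset.sum_congr rfl fun l hl => ?_
  rw [mem_orderings] at hl
  have hlen : l.length = NL.length := by rw [← hcard, ← hl, Multiset.coe_card]
  have hdisj : l.Disjoint NL := by
    rw [← Multiset.coe_disjoint, hl, hNL']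
    exact disjoint_negMultiset_posMultiset d
  rw [orderingWeight_eq_neg_one_pow_mul_prod _ _ hlen hdisj, hcard, ← hl, ← hNL',
    sum_map_coe_add_one, sum_map_coe_add_one]
  rfl

theorem generalized_macmahon (hm : 1 ≤ m)
    (A : Matrix (Fin m) (Fin m) R)
    (d : Fin m → ℤ) (hd : ∑ i, d i = 0)
    (F : MvPowerSeries (Fin m) R)
    -- `F = Σ_{p = r + d} G(p;r) x^p`: the coefficient of `x^p` in `F` is `G(p;r)` when
    -- `p = r + d` for a nonnegative integer vector `r`, and `0` when no such `r` exists.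
    (hF₁ : ∀ p r : Fin m →₀ ℕ, (∀ i, (p i : ℤ) = (r i : ℤ) + d i) →
      MvPowerSeries.coeff p F = Gcoef A p r)
    (hF₂ : ∀ p : Fin m →₀ ℕ, (∃ i, (p i : ℤ) < d i) →
      MvPowerSeries.coeff p F = 0)
    -- `NL` is the weakly increasing list `N₁ ≤ N₂ ≤ ⋯ ≤ N_δ` enumerating `𝒩`.
    (NL : List (Fin m)) (hNL : NL.Pairwise (· ≤ ·))
    (hNL' : (NL : Multiset (Fin m)) = posMultiset d) :
    F = (-1 : MvPowerSeries (Fin m) R) ^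
          ((((negMultiset d).map fun i => (i : ℕ) + 1).sum +
            ((posMultiset d).map fun i => (i : ℕ) + 1).sum)) *
        Ring.inverse (IXA A).det *
        ∑ᶠ l ∈ {l : List (Fin m) | (l : Multiset (Fin m)) = negMultiset d},
          ∏ k ∈ Finset.range (Multiset.card (negMultiset d)),
            ((-1 : MvPowerSeries (Fin m) R) ^
                (((l.take k).toFinset.filter fun x =>
                    (l.getD k ⟨0, hm⟩) ⊓ (NL.getD k ⟨0, hm⟩) < x ∧
                      x < (l.getD k ⟨0, hm⟩) ⊔ (NL.getD k ⟨0, hm⟩)).card) *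
              detDel (IXA A) ((l.take (k + 1)).toFinset)
                (insert (NL.getD k ⟨0, hm⟩)
                  (((l.take (k + 1)).toFinset).erase (l.getD k ⟨0, hm⟩))) *
              Ring.inverse
                (detDel (IXA A) ((l.take (k + 1)).toFinset) ((l.take (k + 1)).toFinset))) :=
  generalized_macmahon_general hm A d hd F hF₁ hF₂ NL hNL'

end
end
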